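/- arXiv:2604.22377 — 6 statements merged into one kernel-verified Lean document; each statement's English description precedes it below -/
import Mathlib

section
/- ∑_{n=0}^∞ (42n+5)·C(2n,n)³ / 2^{12n} = 16/π, where C(2n,n) is the central binomial coefficient. -/
/-!
The proof is by the Wilf–Zeilberger method. With `h m = (1/2)_m` the rising factorial, put

* `G n j = p n j * h n ^ 4 * h (n + j) ^ 2 / ((2 n + j + 1)! ^ 2 * (2 n)!)`, where `p` is an explicit
  cubic polynomial with nonnegative coefficients,
* `F n j = 32 n * h n ^ 4 * h (n + j) ^ 2 / ((2 n + j)! ^ 2 * (2 n)!)`.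

This pair satisfies `F (n + 1) j - F n j = G n (j + 1) - G n j` (lemma `wz`); it arises from Gauss's
`₂F₁` summation. Since `F 0 j = 0` and `F n j → 0` as `n → ∞`, the sum `∑ n, G n j` does not depend
on `j`. At `j = 0` it is the series to be evaluated, because `(1/2)_n = n! * C(2n, n) / 4 ^ n`.
As `j → ∞`, the terms with `n ≥ 1` vanish, dominated by `84 / C(2n, n)`, while
`G 0 j → 16 / π` by Wallis's product (lemma `tendsto_G_zero`).
-/

namespace Ramanujan42

open Filter Topology Nat

/-- The rising factorial `(1/2)_m = (1/2) (3/2) ⋯ (m - 1/2)`. -/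
noncomputable def h (m : ℕ) : ℝ := ∏ i ∈ Finset.range m, ((i : ℝ) + 1 / 2)

/-- The polynomial factor of `G`. -/
noncomputable def p (n j : ℝ) : ℝ :=
  16 * j ^ 3 + (36 + 104 * n) * j ^ 2 + (224 * n ^ 2 + 160 * n + 24) * j
    + (42 * n + 5) * (2 * n + 1) ^ 2

/-- The summand of the WZ pair, summed over `n`. -/
noncomputable def G (n j : ℕ) : ℝ :=
  p n j * h n ^ 4 * h (n + j) ^ 2 / (((2 * n + j + 1)! : ℝ) ^ 2 * ((2 * n)! : ℝ))

/-- The companion of `G` in the WZ pair. -/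
noncomputable def F (n j : ℕ) : ℝ :=
  32 * n * h n ^ 4 * h (n + j) ^ 2 / (((2 * n + j)! : ℝ) ^ 2 * ((2 * n)! : ℝ))

lemma h_zero : h 0 = 1 := by simp [h]

lemma h_succ (m : ℕ) : h (m + 1) = h m * (m + 1 / 2) := by
  simp [h, Finset.prod_range_succ]

lemma h_pos (m : ℕ) : 0 < h m := by
  unfold h
  exact Finset.prod_pos fun i _ => by positivity

lemma h_eq (m : ℕ) : h m * 4 ^ m = m ! * (centralBinom m : ℝ) := by
  induction m with
  | zero => simp [h_zero]
  | succ m ih =>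
    have hc : ((m : ℝ) + 1) * (centralBinom (m + 1) : ℝ) = 2 * (2 * m + 1) * centralBinom m := by
      exact_mod_cast succ_mul_centralBinom_succ m
    rw [h_succ, factorial_succ]
    push_cast
    calc h m * (m + 1 / 2) * 4 ^ (m + 1) = (h m * 4 ^ m) * (2 * (2 * m + 1)) := by ring
      _ = m ! * (2 * (2 * m + 1) * centralBinom m) := by rw [ih]; ring
      _ = _ := by rw [← hc]; ring

lemma wz (n j : ℕ) : F (n + 1) j - F n j = G n (j + 1) - G n j := by
  have e1 : n + 1 + j = n + j + 1 := by ring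
  have e2 : 2 * (n + 1) + j = 2 * n + j + 1 + 1 := by ring
  have e3 : 2 * (n + 1) = 2 * n + 1 + 1 := by ring
  have e4 : n + (j + 1) = n + j + 1 := by ring
  have e5 : 2 * n + (j + 1) + 1 = 2 * n + j + 1 + 1 := by ring
  unfold F G p
  rw [e2, e3, e1, e4, e5, h_succ, h_succ]
  simp only [factorial_succ]
  push_cast
  have h1 : ((2 * n + j)! : ℝ) ≠ 0 := by positivity
  have h2 : ((2 * n)! : ℝ) ≠ 0 := by positivity
  have h3 : (2 * (n : ℝ) + j + 1) ≠ 0 := by positivity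
  have h4 : (2 * (n : ℝ) + j + 1 + 1) ≠ 0 := by positivity
  have h5 : (2 * (n : ℝ) + 1) ≠ 0 := by positivity
  have h6 : (2 * (n : ℝ) + 1 + 1) ≠ 0 := by positivity
  field_simp
  ring

lemma G_nonneg (n j : ℕ) : 0 ≤ G n j := by
  have := h_pos n
  have := h_pos (n + j)
  unfold G p
  positivity

lemma F_nonneg (n j : ℕ) : 0 ≤ F n j := by
  have := h_pos n
  have := h_pos (n + j)
  unfold F
  positivity

/-- Used to deduce `F n j → 0` as `n → ∞` from the summability of `G`: the difference of the
polynomial factors has nonnegative coefficients. -/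
lemma F_le_G (n j : ℕ) : F n j ≤ G n j := by
  have h1 := h_pos n
  have h2 := h_pos (n + j)
  have hp : 32 * (n : ℝ) * (2 * n + j + 1) ^ 2 ≤ p n j := by
    rw [← sub_nonneg]
    have : p n j - 32 * (n : ℝ) * (2 * n + j + 1) ^ 2 = 40 * (n : ℝ) ^ 3 + 96 * n ^ 2 * j
        + 72 * n * j ^ 2 + 16 * j ^ 3 + 60 * n ^ 2 + 96 * n * j + 36 * j ^ 2 + 30 * n + 24 * j
        + 5 := by
      unfold p; ring
    rw [this]
    positivity
  have hF : F n j = 32 * (n : ℝ) * (2 * n + j + 1) ^ 2 * (h n ^ 4 * h (n + j) ^ 2 /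
      (((2 * n + j + 1)! : ℝ) ^ 2 * ((2 * n)! : ℝ))) := by
    unfold F
    rw [factorial_succ]
    push_cast
    have h3 : (2 * (n : ℝ) + j + 1) ≠ 0 := by positivity
    field_simp
  have hG : G n j = p n j * (h n ^ 4 * h (n + j) ^ 2 /
      (((2 * n + j + 1)! : ℝ) ^ 2 * ((2 * n)! : ℝ))) := by
    unfold G; ring
  rw [hF, hG]
  gcongr

/-- A form of Wallis's inequality. -/
lemma h_sq_le (m : ℕ) : (2 * (m : ℝ) + 1) * h m ^ 2 ≤ (m ! : ℝ) ^ 2 := by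
  induction m with
  | zero => simp [h_zero]
  | succ m ih =>
    rw [h_succ, factorial_succ]
    push_cast
    have : (2 * ((m : ℝ) + 1) + 1) * (m + 1 / 2) ^ 2 ≤ (m + 1) ^ 2 * (2 * m + 1) := by
      have : (0 : ℝ) ≤ m := by positivity
      nlinarith
    calc (2 * ((m : ℝ) + 1) + 1) * (h m * (m + 1 / 2)) ^ 2
        = ((2 * ((m : ℝ) + 1) + 1) * (m + 1 / 2) ^ 2) * h m ^ 2 := by ring
      _ ≤ ((m + 1) ^ 2 * (2 * m + 1)) * h m ^ 2 := by gcongr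
      _ = (m + 1) ^ 2 * ((2 * m + 1) * h m ^ 2) := by ring
      _ ≤ (m + 1) ^ 2 * (m ! : ℝ) ^ 2 := by gcongr
      _ = _ := by ring

lemma h_le (m : ℕ) : h m ≤ m ! := by
  have h1 := h_sq_le m
  have h2 := h_pos m
  refine le_of_pow_le_pow_left₀ two_ne_zero (by positivity) ?_
  nlinarith [sq_nonneg (h m), (by positivity : (0 : ℝ) ≤ m * h m ^ 2)]

/-- The reciprocal of the binomial coefficient `C(2n + j + 1, n)`. -/
noncomputable def r (n j : ℕ) : ℝ := (n + j + 1)! * n ! / (2 * n + j + 1)!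

lemma r_nonneg (n j : ℕ) : 0 ≤ r n j := by unfold r; positivity

lemma r_le_one (n j : ℕ) : r n j ≤ 1 := by
  unfold r
  rw [div_le_one (by positivity)]
  have h1 : (n + j + 1)! * n ! ≤ (n + j + 1 + n)! :=
    Nat.le_of_dvd (factorial_pos _) (factorial_mul_factorial_dvd_factorial_add _ _)
  have e : n + j + 1 + n = 2 * n + j + 1 := by ring
  rw [e] at h1
  exact_mod_cast h1

lemma r_succ_le (m j : ℕ) : r (m + 1) j ≤ (m + 1) / (j + 1) := by
  unfold r
  rw [div_le_div_iff₀ (by positivity) (by positivity)]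
  have h1 : (m + 1 + j + 1 + 1)! * m ! ≤ (m + 1 + j + 1 + 1 + m)! :=
    Nat.le_of_dvd (factorial_pos _) (factorial_mul_factorial_dvd_factorial_add _ _)
  have e : m + 1 + j + 1 + 1 + m = 2 * (m + 1) + j + 1 := by ring
  rw [e, factorial_succ (m + 1 + j + 1)] at h1
  rw [factorial_succ m]
  have h2 : (m + 1 + j + 1)! * ((m + 1) * m !) * (j + 1) ≤ (m + 1) * (2 * (m + 1) + j + 1)! :=
    calc (m + 1 + j + 1)! * ((m + 1) * m !) * (j + 1)
        = (m + 1) * ((j + 1) * (m + 1 + j + 1)! * m !) := by ring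
      _ ≤ (m + 1) * ((m + 1 + j + 1 + 1) * (m + 1 + j + 1)! * m !) := by gcongr; omega
      _ ≤ _ := by gcongr
  exact_mod_cast h2

/-- The factor `1 / C(2n, n)` makes the bound summable in `n`, uniformly in `j`; the factor `r n j ^ 2`
makes it tend to `0` as `j → ∞` when `n ≥ 1`. The constant `84` is the least with
`168 n ^ 3 ≤ 84 * 2 n * n ^ 2`, comparing leading terms of `p`. -/
lemma G_le (n j : ℕ) : G n j ≤ 84 / centralBinom n * r n j ^ 2 := by
  have h1 := h_pos n
  have h2 := h_pos (n + j)
  have hp : p n j ≤ 84 * (2 * ((n + j : ℕ) : ℝ) + 1) * (n + j + 1) ^ 2 := by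
    rw [← sub_nonneg]
    have : 84 * (2 * ((n + j : ℕ) : ℝ) + 1) * (n + j + 1) ^ 2 - p n j
        = 280 * n ^ 2 * j + 400 * n * j ^ 2 + 152 * j ^ 3 + 232 * n ^ 2 + 680 * n * j
          + 384 * j ^ 2 + 274 * n + 312 * j + 79 := by
      unfold p; push_cast; ring
    rw [this]
    positivity
  have hc : ((2 * n)! : ℝ) = centralBinom n * (n ! : ℝ) ^ 2 := by
    have := choose_mul_factorial_mul_factorial (show n ≤ 2 * n by omega)
    rw [← centralBinom_eq_two_mul_choose, show 2 * n - n = n by omega] at this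
    rw [← this]; push_cast; ring
  have hcb : (0 : ℝ) < centralBinom n := by exact_mod_cast centralBinom_pos n
  calc G n j = p n j * h n ^ 4 * h (n + j) ^ 2 /
        (((2 * n + j + 1)! : ℝ) ^ 2 * ((2 * n)! : ℝ)) := rfl
    _ ≤ (84 * (2 * ((n + j : ℕ) : ℝ) + 1) * (n + j + 1) ^ 2) * (n ! : ℝ) ^ 4 * h (n + j) ^ 2 /
        (((2 * n + j + 1)! : ℝ) ^ 2 * ((2 * n)! : ℝ)) := by
      gcongr
      exact h_le n
    _ = 84 * (n + j + 1) ^ 2 * (n ! : ℝ) ^ 4 * ((2 * ((n + j : ℕ) : ℝ) + 1) * h (n + j) ^ 2) /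
        (((2 * n + j + 1)! : ℝ) ^ 2 * ((2 * n)! : ℝ)) := by ring
    _ ≤ 84 * (n + j + 1) ^ 2 * (n ! : ℝ) ^ 4 * ((n + j)! : ℝ) ^ 2 /
        (((2 * n + j + 1)! : ℝ) ^ 2 * ((2 * n)! : ℝ)) := by
      gcongr
      exact h_sq_le _
    _ = 84 / centralBinom n * r n j ^ 2 := by
      unfold r
      rw [hc, factorial_succ (n + j)]
      push_cast
      field_simp

lemma summable_bound : Summable fun n : ℕ => 84 / (centralBinom n : ℝ) := by
  have h0 : ∀ n : ℕ, (2 : ℝ) ^ n ≤ centralBinom n := by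
    intro n
    induction n with
    | zero => simp
    | succ n ih =>
      have hc : ((n : ℝ) + 1) * (centralBinom (n + 1) : ℝ) = 2 * (2 * n + 1) * centralBinom n := by
        exact_mod_cast succ_mul_centralBinom_succ n
      have hn : (0 : ℝ) ≤ n := by positivity
      have hcn : (0 : ℝ) ≤ centralBinom n := by positivity
      have : ((n : ℝ) + 1) * (2 ^ (n + 1)) ≤ ((n : ℝ) + 1) * (centralBinom (n + 1) : ℝ) := by
        rw [hc, pow_succ]
        nlinarith [mul_nonneg hn hcn]
      exact le_of_mul_le_mul_left this (by positivity)
  refine Summable.of_nonneg_of_le (fun n => by positivity) (fun n => ?_)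
    ((summable_geometric_two).mul_left 84)
  rw [div_eq_mul_inv, one_div, inv_pow]
  gcongr
  exact h0 n

lemma G_le' (n j : ℕ) : G n j ≤ 84 / centralBinom n := by
  refine (G_le n j).trans (mul_le_of_le_one_right (by positivity) ?_)
  exact pow_le_one₀ (r_nonneg n j) (r_le_one n j)

lemma summable_G (j : ℕ) : Summable fun n => G n j :=
  Summable.of_nonneg_of_le (fun n => G_nonneg n j) (fun n => G_le' n j) summable_bound

lemma tsum_G_succ (j : ℕ) : ∑' n, G n (j + 1) = ∑' n, G n j := by
  have hF : Tendsto (fun N => F N j) atTop (𝓝 0) :=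
    squeeze_zero (fun N => F_nonneg N j) (fun N => F_le_G N j)
      (summable_G j).tendsto_atTop_zero
  have h1 := (summable_G (j + 1)).hasSum.tendsto_sum_nat.sub (summable_G j).hasSum.tendsto_sum_nat
  have h2 : ∀ N, ∑ n ∈ Finset.range N, G n (j + 1) - ∑ n ∈ Finset.range N, G n j = F N j := by
    intro N
    rw [← Finset.sum_sub_distrib]
    simp_rw [← wz]
    rw [Finset.sum_range_sub (fun n => F n j)]
    simp [F]
  simp_rw [h2] at h1
  exact sub_eq_zero.mp (tendsto_nhds_unique h1 hF)

lemma tsum_G (j : ℕ) : ∑' n, G n j = ∑' n, G n 0 := by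
  induction j with
  | zero => rfl
  | succ j ih => rw [tsum_G_succ, ih]

lemma wallis_eq (m : ℕ) : Real.Wallis.W m * ((2 * m + 1) * h m ^ 2) = (m ! : ℝ) ^ 2 := by
  induction m with
  | zero => simp [h_zero, Real.Wallis.W]
  | succ m ih =>
    rw [Real.Wallis.W_succ, h_succ, factorial_succ]
    push_cast
    rw [mul_pow, mul_pow, ← ih]
    field_simp
    ring

lemma G_zero (j : ℕ) :
    G 0 j = (Real.Wallis.W j)⁻¹ * (8 - 2 * (1 / ((j : ℝ) + 1)) - (1 / ((j : ℝ) + 1)) ^ 2) := by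
  have hW := Real.Wallis.W_pos j
  have e := wallis_eq j
  have hj : (j ! : ℝ) ≠ 0 := by positivity
  have hh : h j ^ 2 = (j ! : ℝ) ^ 2 / (Real.Wallis.W j * (2 * j + 1)) := by
    rw [eq_div_iff (by positivity), ← e]; ring
  unfold G p
  simp only [mul_zero, zero_add, h_zero, factorial_succ, hh]
  push_cast
  simp only [factorial_zero]
  field_simp
  push_cast
  ring

lemma tendsto_G_zero : Tendsto (fun j => G 0 j) atTop (𝓝 (16 / Real.pi)) := by
  simp_rw [G_zero]
  have h1 := tendsto_one_div_add_atTop_nhds_zero_nat (𝕜 := ℝ)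
  have h2 := Real.Wallis.tendsto_W_nhds_pi_div_two.inv₀ (by positivity)
  have h3 := h2.mul (((h1.const_mul 2).const_sub 8).sub (h1.pow 2))
  convert h3 using 2
  field_simp
  norm_num

lemma tendsto_G_succ (m : ℕ) : Tendsto (fun j => G (m + 1) j) atTop (𝓝 0) := by
  have h1 : Tendsto (fun j : ℕ => 84 / (centralBinom (m + 1) : ℝ) *
      (((m : ℝ) + 1) * (1 / ((j : ℝ) + 1))) ^ 2) atTop (𝓝 0) := by
    have := (((tendsto_one_div_add_atTop_nhds_zero_nat (𝕜 := ℝ)).const_mul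
      ((m : ℝ) + 1)).pow 2).const_mul (84 / (centralBinom (m + 1) : ℝ))
    simpa using this
  refine squeeze_zero (fun j => G_nonneg _ j) (fun j => (G_le _ j).trans ?_) h1
  have := r_nonneg (m + 1) j
  have := r_succ_le m j
  rw [mul_one_div]
  gcongr

lemma tsum_G_zero : ∑' n, G n 0 = 16 / Real.pi := by
  have h1 : Tendsto (fun j => ∑' n, G n j) atTop
      (𝓝 (∑' n : ℕ, if n = 0 then 16 / Real.pi else 0)) := by
    refine tendsto_tsum_of_dominated_convergence summable_bound (fun n => ?_)
      (Eventually.of_forall fun j n => ?_)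
    · cases n with
      | zero => simpa using tendsto_G_zero
      | succ m => simpa using tendsto_G_succ m
    · rw [Real.norm_of_nonneg (G_nonneg n j)]
      exact G_le' n j
  simp_rw [tsum_G, tsum_ite_eq] at h1
  exact tendsto_nhds_unique tendsto_const_nhds h1

lemma G_eq (n : ℕ) :
    G n 0 = (42 * (n : ℝ) + 5) * (Nat.choose (2 * n) n : ℝ) ^ 3 / 2 ^ (12 * n) := by
  have hc : ((2 * n)! : ℝ) = centralBinom n * (n ! : ℝ) ^ 2 := by
    have := choose_mul_factorial_mul_factorial (show n ≤ 2 * n by omega)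
    rw [← centralBinom_eq_two_mul_choose, show 2 * n - n = n by omega] at this
    rw [← this]; push_cast; ring
  have hcb : (0 : ℝ) < centralBinom n := by exact_mod_cast centralBinom_pos n
  have hh : h n = n ! * (centralBinom n : ℝ) / 4 ^ n := by
    rw [eq_div_iff (by positivity), h_eq]
  have e : (2 : ℝ) ^ (12 * n) = (4 ^ n) ^ 6 := by
    rw [← pow_mul, mul_comm n 6, show (4 : ℝ) = 2 ^ 2 by norm_num, ← pow_mul]
    ring_nf
  rw [← centralBinom_eq_two_mul_choose, e]
  unfold G p
  simp only [add_zero, factorial_succ]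
  push_cast
  rw [hc, hh]
  field_simp
  ring

end Ramanujan42

theorem ramanujan_42n5 :
    ∑' n : ℕ, (42 * (n : ℝ) + 5) * (Nat.choose (2 * n) n : ℝ) ^ 3 / 2 ^ (12 * n) =
      16 / Real.pi := by
  simp_rw [← Ramanujan42.G_eq]
  exact Ramanujan42.tsum_G_zero
end

section
/- ∑_{n=0}^∞ (6n+1)·C(2n,n)³ / 2^{8n} = 4/π, where C(2n,n) is the central binomial coefficient. -/
/-!
Write `c k = C(2k,k) / 4 ^ k = (1/2)_k / k!`. The series is the value at `x = -1/2` of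

  `S x = ∑ k, (6 k + 1) (c k) ^ 3 / 4 ^ k * (-x)_k / (2 x + 3/2)_k`,

because `(-x)_k` and `(2 x + 3/2)_k` coincide there. This is a case of a strange evaluation of
Gessel and Stanton, and its summand has a Wilf–Zeilberger certificate (`wz_step`, `wz_sum`), which
gives, for all real `x ≥ -1/2`, the recurrence (`S_rec`)

  `(x + 1) ^ 2 * S (x + 1) = (x + 3/4) * (x + 5/4) * S x`.

At natural numbers the series terminates, `S 0 = 1`, and the recurrence determines `S m`; it also
expresses `S (m - 1/2)` through `S (-1/2)`. Comparing the two products (`S_compare`),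

  `S (-1/2) * S m = (4 m + 1) * (c m) ^ 2 * S (m - 1/2)`.

By dominated convergence `S` has a limit `T` at infinity (`exists_tendsto_S`), and `T ≥ 1/2`
since `S m` is a product of the factors `1 - 1 / (16 j ^ 2)`. Hence
`S (-1/2) = lim (4 m + 1) * (c m) ^ 2`, which Wallis' product identifies as `4 / π`.
-/

open Filter Topology Finset

namespace RamanujanSixN

/-- The rising factorial `(x)_k = x (x + 1) ⋯ (x + k - 1)`. -/
noncomputable def rise (x : ℝ) (k : ℕ) : ℝ := ∏ j ∈ range k, (x + j)

/-- The normalised central binomial coefficient `C(2k,k) / 4 ^ k = (1/2)_k / k!`. -/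
noncomputable def c (k : ℕ) : ℝ := (Nat.centralBinom k : ℝ) / 4 ^ k

/-- The summand of the one-parameter deformation of Ramanujan's series. -/
noncomputable def F (x : ℝ) (k : ℕ) : ℝ :=
  (6 * (k : ℝ) + 1) * (c k ^ 3 / 4 ^ k) * (rise (-x) k / rise (2 * x + 3 / 2) k)

/-- The Wilf–Zeilberger companion of `F`, shifted by one so that it equals a partial sum. -/
noncomputable def H (x : ℝ) (k : ℕ) : ℝ :=
  1 / 2 * ((k : ℝ) + 1 / 2) ^ 3 * (c k ^ 3 / 4 ^ k) * (rise (-x) k / rise (2 * x + 7 / 2) k)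

/-- The deformed series. -/
noncomputable def S (x : ℝ) : ℝ := ∑' k, F x k

@[simp] lemma rise_zero (x : ℝ) : rise x 0 = 1 := by simp [rise]

lemma rise_succ (x : ℝ) (k : ℕ) : rise x (k + 1) = rise x k * (x + k) := by
  simp [rise, prod_range_succ]

lemma rise_succ' (x : ℝ) (k : ℕ) : rise x (k + 1) = x * rise (x + 1) k := by
  simp only [rise, prod_range_succ', Nat.cast_add, Nat.cast_one, Nat.cast_zero, add_zero]
  rw [mul_comm]
  congr 1
  exact prod_congr rfl fun j _ => by ring

lemma rise_pos {y : ℝ} (hy : 0 < y) (k : ℕ) : 0 < rise y k :=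
  prod_pos fun j _ => by positivity

lemma abs_rise_div_le {x y : ℝ} (h : |x| ≤ y) (k : ℕ) : |rise x k / rise y k| ≤ 1 := by
  rw [rise, rise, ← prod_div_distrib, abs_prod]
  refine prod_le_one (fun _ _ => abs_nonneg _) fun j _ => ?_
  have hj : (0 : ℝ) ≤ j := j.cast_nonneg
  have hy : 0 ≤ y := (abs_nonneg x).trans h
  rw [abs_div, abs_of_nonneg (by positivity : 0 ≤ y + j)]
  refine div_le_one_of_le₀ ?_ (by positivity)
  calc |x + j| ≤ |x| + |(j : ℝ)| := abs_add_le _ _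
    _ ≤ y + j := by rw [abs_of_nonneg hj]; linarith

@[simp] lemma c_zero : c 0 = 1 := by simp [c]

lemma c_nonneg (k : ℕ) : 0 ≤ c k := by unfold c; positivity

lemma c_le_one (k : ℕ) : c k ≤ 1 := by
  unfold c
  refine div_le_one_of_le₀ ?_ (by positivity)
  exact_mod_cast Nat.centralBinom_le_four_pow k

lemma c_succ (k : ℕ) : c (k + 1) = c k * ((k : ℝ) + 1 / 2) / (k + 1) := by
  have h : ((k : ℝ) + 1) * (Nat.centralBinom (k + 1) : ℝ)
      = 2 * (2 * k + 1) * (Nat.centralBinom k : ℝ) := by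
    exact_mod_cast Nat.succ_mul_centralBinom_succ k
  have hk : (k : ℝ) + 1 ≠ 0 := by positivity
  unfold c
  rw [eq_div_iff hk, pow_succ]
  field_simp
  linarith

/-! ### The recurrence in the parameter -/

/-- The Wilf–Zeilberger identity. After division by the common hypergeometric term both sides are
polynomials in `x` and `k`. -/
lemma wz_step {x : ℝ} (hx : -1 / 2 ≤ x) (k : ℕ) :
    (x + 1) ^ 2 * F (x + 1) (k + 1) - (x + 3 / 4) * (x + 5 / 4) * F x (k + 1)
      = H x (k + 1) - H x k := by
  have hk : (0 : ℝ) ≤ k := k.cast_nonneg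
  have hD : 0 < 2 * x + 7 / 2 := by linarith
  have h0 : (0 : ℝ) < 2 * x + 3 / 2 := by linarith
  have h1 : (0 : ℝ) < 2 * x + 5 / 2 := by linarith
  have hk2 : (0 : ℝ) < 2 * x + 7 / 2 + k := by linarith
  have hk1 : (0 : ℝ) < 2 * x + 5 / 2 + k := by linarith
  have hR := rise_pos hD k
  have e1 : rise (-(x + 1)) (k + 1) = -(x + 1) * rise (-x) k := by
    rw [rise_succ']; congr 2; ring
  have e2 : rise (2 * (x + 1) + 3 / 2) (k + 1) = rise (2 * x + 7 / 2) k * (2 * x + 7 / 2 + k) := by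
    rw [← rise_succ]; congr 1; ring
  -- `(D)_{k+1} = D (D+1) (D+2)_k / (D+k+1)` with `D = 2 x + 3/2`
  have e3 : rise (2 * x + 3 / 2) (k + 1)
      = (2 * x + 3 / 2) * (2 * x + 5 / 2) * rise (2 * x + 7 / 2) k / (2 * x + 5 / 2 + k) := by
    have a : rise (2 * x + 3 / 2) (k + 1 + 1)
        = (2 * x + 3 / 2) * ((2 * x + 5 / 2) * rise (2 * x + 7 / 2) k) := by
      rw [rise_succ', rise_succ']
      ring_nf
    rw [rise_succ] at a
    rw [eq_div_iff hk1.ne', mul_assoc (2 * x + 3 / 2), ← a]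
    push_cast; ring
  unfold F H
  rw [e1, e2, e3, rise_succ (-x), rise_succ (2 * x + 7 / 2), c_succ, pow_succ (4 : ℝ) k]
  have hk' : (k : ℝ) + 1 ≠ 0 := by positivity
  push_cast
  generalize rise (2 * x + 7 / 2) k = R at *
  generalize rise (-x) k = N at *
  generalize c k = C at *
  have hR' := hR.ne'
  generalize (k : ℝ) = K at *
  -- Opaque names for the linear denominators let `field_simp` cancel them as atoms.
  obtain ⟨P, hP⟩ : ∃ P, P = 2 * x + 7 / 2 + K := ⟨_, rfl⟩
  obtain ⟨Q, hQ⟩ : ∃ Q, Q = 2 * x + 5 / 2 + K := ⟨_, rfl⟩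
  obtain ⟨U, hU⟩ : ∃ U, U = 2 * x + 3 / 2 := ⟨_, rfl⟩
  obtain ⟨V, hV⟩ : ∃ V, V = 2 * x + 5 / 2 := ⟨_, rfl⟩
  rw [← hP, ← hQ, ← hU, ← hV]
  rw [← hP] at hk2
  rw [← hQ] at hk1
  rw [← hU] at h0
  rw [← hV] at h1
  field_simp
  rw [hP, hQ, hU, hV]
  ring

lemma wz_sum {x : ℝ} (hx : -1 / 2 ≤ x) (k : ℕ) :
    ∑ j ∈ range (k + 1), ((x + 1) ^ 2 * F (x + 1) j - (x + 3 / 4) * (x + 5 / 4) * F x j)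
      = H x k := by
  induction k with
  | zero => simp [F, H]; ring
  | succ k ih => rw [sum_range_succ, ih, wz_step hx]; ring

lemma abs_param_le {x y : ℝ} (hx : -1 / 2 ≤ x) (hy : 2 * x + 3 / 2 ≤ y) : |(-x)| ≤ y := by
  rw [abs_le]; constructor <;> linarith

lemma weight_le (k : ℕ) : c k ^ 3 / 4 ^ k ≤ (1 / 4 : ℝ) ^ k := by
  rw [one_div, inv_pow, ← one_div]
  gcongr
  exact pow_le_one₀ (c_nonneg k) (c_le_one k)

lemma norm_F_le {x : ℝ} (hx : -1 / 2 ≤ x) (k : ℕ) :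
    ‖F x k‖ ≤ (6 * (k : ℝ) + 1) * (1 / 4) ^ k := by
  have hw : 0 ≤ c k ^ 3 / 4 ^ k := by have := c_nonneg k; positivity
  rw [F, Real.norm_eq_abs, abs_mul, abs_of_nonneg (by positivity)]
  calc _ ≤ (6 * (k : ℝ) + 1) * (c k ^ 3 / 4 ^ k) * 1 := by
        gcongr; exact abs_rise_div_le (abs_param_le hx le_rfl) k
    _ ≤ _ := by rw [mul_one]; gcongr; exact weight_le k

lemma summable_bound : Summable fun k : ℕ => (6 * (k : ℝ) + 1) * (1 / 4 : ℝ) ^ k := by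
  have h (i : ℕ) : Summable fun k : ℕ => (k : ℝ) ^ i * (1 / 4 : ℝ) ^ k :=
    summable_pow_mul_geometric_of_norm_lt_one i (by norm_num)
  refine (((h 1).mul_left 6).add (h 0)).congr fun k => ?_
  ring

lemma summable_F {x : ℝ} (hx : -1 / 2 ≤ x) : Summable (F x) :=
  Summable.of_norm_bounded summable_bound (norm_F_le hx)

lemma tendsto_H {x : ℝ} (hx : -1 / 2 ≤ x) : Tendsto (H x) atTop (𝓝 0) := by
  have h (i : ℕ) : Tendsto (fun k : ℕ => (k : ℝ) ^ i * (1 / 4 : ℝ) ^ k) atTop (𝓝 0) :=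
    tendsto_pow_const_mul_const_pow_of_abs_lt_one i (by norm_num [abs_of_pos])
  have hb : Tendsto (fun k : ℕ => 1 / 2 * ((k : ℝ) + 1 / 2) ^ 3 * (1 / 4 : ℝ) ^ k) atTop (𝓝 0) := by
    have := ((((h 3).const_mul (1 / 2)).add ((h 2).const_mul (3 / 4))).add
      ((h 1).const_mul (3 / 8))).add ((h 0).const_mul (1 / 16))
    simp only [mul_zero, add_zero] at this
    refine this.congr fun k => ?_
    ring
  refine squeeze_zero_norm (fun k => ?_) hb
  have hw : 0 ≤ c k ^ 3 / 4 ^ k := by have := c_nonneg k; positivity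
  rw [H, Real.norm_eq_abs, abs_mul, abs_of_nonneg (by positivity)]
  calc _ ≤ 1 / 2 * ((k : ℝ) + 1 / 2) ^ 3 * (c k ^ 3 / 4 ^ k) * 1 := by
        gcongr; exact abs_rise_div_le (abs_param_le hx (by linarith)) k
    _ ≤ _ := by rw [mul_one]; gcongr; exact weight_le k

lemma S_rec {x : ℝ} (hx : -1 / 2 ≤ x) :
    (x + 1) ^ 2 * S (x + 1) = (x + 3 / 4) * (x + 5 / 4) * S x := by
  have h := ((summable_F (x := x + 1) (by linarith)).hasSum.mul_left ((x + 1) ^ 2)).sub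
    ((summable_F hx).hasSum.mul_left ((x + 3 / 4) * (x + 5 / 4)))
  have h' := (tendsto_add_atTop_iff_nat 1).2 h.tendsto_sum_nat
  simp only [wz_sum hx] at h'
  exact sub_eq_zero.1 (tendsto_nhds_unique h' (tendsto_H hx))

/-! ### Values at integers and half-integers -/

lemma S_zero : S 0 = 1 := by
  rw [S, tsum_eq_single 0]
  · simp [F]
  · intro k hk
    obtain ⟨k, rfl⟩ := Nat.exists_eq_succ_of_ne_zero hk
    simp [F, rise_succ']

/-- Both sides obey the same first-order recurrence in `m`; the factor `(4 m + 1) * (c m) ^ 2` is the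
quotient of the products produced by `S_rec` along integers and along half-integers. -/
lemma S_compare (m : ℕ) :
    S (-1 / 2) * S m = (4 * (m : ℝ) + 1) * c m ^ 2 * S (m - 1 / 2) := by
  induction m with
  | zero => simp [S_zero]; norm_num
  | succ m ih =>
    have hm : (0 : ℝ) ≤ m := m.cast_nonneg
    have r1 := S_rec (x := m) (by linarith)
    have r2 := S_rec (x := (m : ℝ) - 1 / 2) (by linarith)
    have e : (m : ℝ) - 1 / 2 + 1 = ((m + 1 : ℕ) : ℝ) - 1 / 2 := by push_cast; ring
    rw [e] at r2
    rw [c_succ]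
    push_cast at r2 ⊢
    have hm1 : (m : ℝ) + 1 ≠ 0 := by positivity
    refine mul_left_cancel₀ (pow_ne_zero 2 hm1) ?_
    calc ((m : ℝ) + 1) ^ 2 * (S (-1 / 2) * S (m + 1))
        = (m + 3 / 4) * (m + 5 / 4) * (S (-1 / 2) * S m) := by linear_combination S (-1 / 2) * r1
      _ = (4 * (m + 1) + 1) * c m ^ 2 * (((m : ℝ) + 1 - 1 / 2) ^ 2 * S (m + 1 - 1 / 2)) := by
          rw [ih, r2]; ring
      _ = _ := by field_simp; ring

/-- The lower bound is the partial product of `1 - 1 / (j + 1) ^ 2`, which is dominated factor by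
factor by the product `1 - 1 / (16 j ^ 2)` for `S m`. It keeps the limit of `S` away from `0`. -/
lemma le_S_nat (m : ℕ) : ((m : ℝ) + 2) / (2 * (m + 1)) ≤ S m := by
  induction m with
  | zero => simp [S_zero]
  | succ m ih =>
    have hm : (0 : ℝ) ≤ m := m.cast_nonneg
    have r := S_rec (x := m) (by linarith)
    have hS : S ((m : ℝ) + 1) = (m + 3 / 4) * (m + 5 / 4) / (m + 1) ^ 2 * S m := by
      field_simp; linarith
    push_cast
    rw [hS]
    refine le_trans ?_ (mul_le_mul_of_nonneg_left ih (by positivity))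
    rw [div_mul_div_comm, div_le_div_iff₀ (by positivity) (by positivity)]
    have : 0 ≤ (m : ℝ) ^ 4 := by positivity
    have : 0 ≤ (m : ℝ) ^ 3 := by positivity
    have : 0 ≤ (m : ℝ) ^ 2 := by positivity
    have : 0 ≤ (m : ℝ) ^ 5 := by positivity
    nlinarith

lemma exists_tendsto_S : ∃ T, Tendsto S atTop (𝓝 T) := by
  refine ⟨_, tendsto_tsum_of_dominated_convergence (f := F)
    (g := fun k => (6 * (k : ℝ) + 1) * (c k ^ 3 / 4 ^ k) * ∏ _j ∈ range k, (-1 / 2 : ℝ))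
    summable_bound (fun k => ?_) ?_⟩
  · refine Tendsto.const_mul _ ?_
    simp only [rise, ← prod_div_distrib]
    refine tendsto_finsetProd _ fun j _ => ?_
    -- `(j - x) / (2 x + 3/2 + j) = -1/2 + (3 j / 2 + 3/4) / (2 x + 3/2 + j)`
    have h1 : Tendsto (fun x : ℝ => 2 * x + 3 / 2 + j) atTop atTop :=
      tendsto_atTop_add_const_right _ _ (tendsto_atTop_add_const_right _ _
        (tendsto_id.const_mul_atTop (by norm_num)))
    have h2 := (h1.const_div_atTop (3 * (j : ℝ) / 2 + 3 / 4)).const_add (-1 / 2 : ℝ)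
    rw [add_zero] at h2
    refine h2.congr' ?_
    filter_upwards [eventually_ge_atTop 0] with x hx
    have : 2 * x + 3 / 2 + (j : ℝ) ≠ 0 := by positivity
    rw [eq_div_iff this, add_mul, div_mul_cancel₀ _ this]
    ring
  · filter_upwards [eventually_ge_atTop (-1 / 2)] with x hx k
    exact norm_F_le hx k

lemma tendsto_wallis :
    Tendsto (fun m : ℕ => (4 * (m : ℝ) + 1) * c m ^ 2) atTop (𝓝 (4 / Real.pi)) := by
  have h1 : Tendsto (fun m : ℕ => 2 - 1 / (2 * (m : ℝ) + 1)) atTop (𝓝 (2 - 0)) := by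
    refine Tendsto.const_sub _ (Tendsto.const_div_atTop ?_ _)
    exact tendsto_atTop_add_const_right _ _
      (tendsto_natCast_atTop_atTop.const_mul_atTop (by norm_num))
  have h2 := h1.div Real.Wallis.tendsto_W_nhds_pi_div_two (by positivity)
  have e : (2 - 0) / (Real.pi / 2) = 4 / Real.pi := by field_simp; norm_num
  rw [e] at h2
  refine h2.congr fun m => ?_
  have hc : (Nat.centralBinom m : ℝ) = ((2 * m).factorial : ℝ) / (m.factorial : ℝ) ^ 2 := by
    rw [Nat.centralBinom_eq_two_mul_choose, Nat.cast_choose ℝ (by omega : m ≤ 2 * m),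
      show 2 * m - m = m by omega, sq]
  have h4 : (2 : ℝ) ^ (4 * m) = (4 ^ m) ^ 2 := by
    rw [← pow_mul, show (4 : ℝ) = 2 ^ 2 by norm_num, ← pow_mul]; ring_nf
  simp only [Pi.div_apply]
  rw [Real.Wallis.W_eq_factorial_ratio, c, hc, h4]
  have := m.factorial_pos
  have := (2 * m).factorial_pos
  field_simp
  ring

lemma S_neg_half : S (-1 / 2) = 4 / Real.pi := by
  obtain ⟨T, hT⟩ := exists_tendsto_S
  have hT1 : Tendsto (fun m : ℕ => S m) atTop (𝓝 T) := hT.comp tendsto_natCast_atTop_atTop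
  have hT2 : Tendsto (fun m : ℕ => S ((m : ℝ) - 1 / 2)) atTop (𝓝 T) :=
    hT.comp (tendsto_atTop_add_const_right _ (-(1 / 2)) tendsto_natCast_atTop_atTop)
  have hpos : 1 / 2 ≤ T := by
    refine ge_of_tendsto' hT1 fun m => le_trans ?_ (le_S_nat m)
    rw [div_le_div_iff₀ (by norm_num) (by positivity)]
    linarith
  have h := tendsto_wallis.mul hT2
  simp only [← S_compare] at h
  exact mul_right_cancel₀ (by linarith) (tendsto_nhds_unique (hT1.const_mul _) h)

end RamanujanSixN

open RamanujanSixN in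
theorem ramanujan_6n1 :
    ∑' n : ℕ, (6 * (n : ℝ) + 1) * (Nat.choose (2 * n) n : ℝ) ^ 3 / 2 ^ (8 * n) =
      4 / Real.pi := by
  rw [← S_neg_half, S]
  refine tsum_congr fun n => ?_
  have e : (-(-1 / 2) : ℝ) = 2 * (-1 / 2) + 3 / 2 - 0 := by norm_num
  have h8 : (2 : ℝ) ^ (8 * n) = (4 ^ n) ^ 3 * 4 ^ n := by
    rw [← pow_succ, ← pow_mul, show (4 : ℝ) = 2 ^ 2 by norm_num, ← pow_mul]; ring_nf
  rw [F, e, sub_zero, div_self (rise_pos (by norm_num) n).ne', c,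
    Nat.centralBinom_eq_two_mul_choose, h8]
  field_simp
end

section
/- ∑_{n=0}^∞ (120n² + 34n + 3)·C(4n,2n)·C(2n,n)⁴ / 2^{16n} = 32/π², where C(m,r) denotes the binomial coefficient. -/
/-!
The proof is a Wilf–Zeilberger argument.  Write `(1/2)_n` for the rising factorial and put
`B(n,k) = (1/2)_n ^ 3 (1/2)_{n+k} ^ 3 (1/2)_{2n+k} / (n! (n+k)! (2n+k)! ^ 3)`.
Up to normalization, `(6n + 4k + 1) B(n,k)` is the `k`-th term of Dougall's bilateral `₅H₅` sum when
its parameters, all equal to `1/2`, are shifted by `(3n; n, n, n, 2n)`.  With the explicit quintic polynomial `Y(n,k)` below,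
`F(n,k) = n (6n + 4k + 1) B(n,k)` and `G(n,k) = Y(n,k) B(n,k) / (2n+k+1) ^ 3` satisfy
`F(n+1,k) - F(n,k) = G(n,k+1) - G(n,k)` (`wz_pair`).

Since `F(0,k) = 0` and `F(n,k) → 0` as `n → ∞`, the sum `∑ₙ G(n,k)` does not depend on `k`
(`tsum_wzG_succ`).  At `k = 0` its terms are those of Guillera's series divided by `16`
(`wzG_zero_right`).  As `k → ∞` only the term `n = 0` survives: the terms decay geometrically in `n`
uniformly in `k`, and `G(1,k) = O(G(0,k) / k)`.  Finally
`G(0,k) = (k + 1/2) ^ 2 (k + 3/2) / (2 (k+1) ^ 3 W(k) ^ 2)`, where `W(k)` is the Wallis product,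
which tends to `π / 2`; hence the common value of the sums is `2 / π ^ 2`.
-/

open Filter Topology Finset

/-- The rising factorial `(1/2)_n = (1/2)(3/2)⋯(n - 1/2)`. -/
noncomputable def halfPoch (n : ℕ) : ℝ := ∏ i ∈ range n, ((i : ℝ) + 1 / 2)

lemma halfPoch_succ (n : ℕ) : halfPoch (n + 1) = halfPoch n * ((n : ℝ) + 1 / 2) :=
  prod_range_succ _ _

lemma halfPoch_pos (n : ℕ) : 0 < halfPoch n := prod_pos fun i _ => by positivity

/-- Equivalently `(1/2)_n = (2n)! / (4 ^ n n!)`. -/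
lemma halfPoch_mul (n : ℕ) :
    halfPoch n * 4 ^ n = (Nat.choose (2 * n) n : ℝ) * (n.factorial : ℝ) := by
  induction n with
  | zero => simp [halfPoch]
  | succ n ih =>
    have h := Nat.succ_mul_centralBinom_succ n
    rw [Nat.centralBinom_eq_two_mul_choose, Nat.centralBinom_eq_two_mul_choose] at h
    have h' : ((n : ℝ) + 1) * (Nat.choose (2 * (n + 1)) (n + 1) : ℝ)
        = 2 * (2 * n + 1) * (Nat.choose (2 * n) n : ℝ) := by exact_mod_cast h
    rw [halfPoch_succ, Nat.factorial_succ]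
    push_cast
    linear_combination (4 * (n : ℝ) + 2) * ih - (n.factorial : ℝ) * h'

/-- The hypergeometric factor common to both members of the WZ pair. -/
noncomputable def wzB (n k : ℕ) : ℝ :=
  halfPoch n ^ 3 * halfPoch (n + k) ^ 3 * halfPoch (2 * n + k) /
    ((n.factorial : ℝ) * ((n + k).factorial : ℝ) * ((2 * n + k).factorial : ℝ) ^ 3)

/-- The polynomial factor of the WZ mate `wzG`. -/
noncomputable def wzY (n k : ℝ) : ℝ :=
  3 / 16 + 13 / 8 * k + 11 / 2 * k ^ 2 + 9 * k ^ 3 + 7 * k ^ 4 + 2 * k ^ 5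
    + n * (13 / 4 + 45 / 2 * k + 54 * k ^ 2 + 55 * k ^ 3 + 20 * k ^ 4)
    + n ^ 2 * (45 / 2 + 108 * k + 162 * k ^ 2 + 78 * k ^ 3)
    + n ^ 3 * (72 + 214 * k + 152 * k ^ 2)
    + n ^ 4 * (107 + 150 * k) + 60 * n ^ 5

/-- The first member of the WZ pair, whose differences are taken in `n`. -/
noncomputable def wzF (n k : ℕ) : ℝ := n * (6 * n + 4 * k + 1) * wzB n k

/-- The second member of the WZ pair, whose differences are taken in `k`. -/
noncomputable def wzG (n k : ℕ) : ℝ := wzB n k * wzY n k / (2 * n + k + 1) ^ 3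

lemma wzB_pos (n k : ℕ) : 0 < wzB n k := by
  have h1 := halfPoch_pos n
  have h2 := halfPoch_pos (n + k)
  have h3 := halfPoch_pos (2 * n + k)
  unfold wzB
  positivity

lemma wzY_pos (n k : ℕ) : 0 < wzY n k := by
  unfold wzY
  positivity

lemma wzG_pos (n k : ℕ) : 0 < wzG n k := by
  have h1 := wzB_pos n k
  have h2 := wzY_pos n k
  unfold wzG
  positivity

lemma wzB_succ_right (n k : ℕ) :
    wzB n (k + 1) = wzB n k * (((n : ℝ) + k + 1 / 2) ^ 3 * (2 * n + k + 1 / 2) /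
      ((n + k + 1) * (2 * n + k + 1) ^ 3)) := by
  unfold wzB
  rw [← add_assoc, ← add_assoc, halfPoch_succ, halfPoch_succ, Nat.factorial_succ,
    Nat.factorial_succ]
  push_cast
  field_simp

lemma wzB_succ_left (n k : ℕ) :
    wzB (n + 1) k = wzB n k * (((n : ℝ) + 1 / 2) ^ 3 * ((n : ℝ) + k + 1 / 2) ^ 3 *
      (2 * n + k + 1 / 2) * (2 * n + k + 3 / 2) /
      ((n + 1) * (n + k + 1) * (2 * n + k + 1) ^ 3 * (2 * n + k + 2) ^ 3)) := by
  unfold wzB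
  rw [show n + 1 + k = n + k + 1 by ring, show 2 * (n + 1) + k = 2 * n + k + 1 + 1 by ring,
    halfPoch_succ n, halfPoch_succ (n + k), halfPoch_succ (2 * n + k + 1),
    halfPoch_succ (2 * n + k), Nat.factorial_succ n, Nat.factorial_succ (n + k),
    Nat.factorial_succ (2 * n + k + 1), Nat.factorial_succ (2 * n + k)]
  push_cast
  rw [show (2 * (n : ℝ) + k + 1 + 1) = 2 * n + k + 2 by ring,
    show (2 * (n : ℝ) + k + 1 + 1 / 2) = 2 * n + k + 3 / 2 by ring]
  field_simp

/-- The WZ identity: after division by `wzB n k` it is an identity of rational functions. -/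
lemma wz_pair (n k : ℕ) : wzF (n + 1) k - wzF n k = wzG n (k + 1) - wzG n k := by
  unfold wzF wzG
  rw [wzB_succ_left, wzB_succ_right]
  unfold wzY
  push_cast
  rw [show (2 * (n : ℝ) + (k + 1) + 1) = 2 * n + k + 2 by ring]
  field_simp
  ring

lemma mul_term_le {B N D y d y' e c : ℝ} (hB : 0 ≤ B) (h : N / D * y / d ≤ y' / e * c) :
    B * (N / D) * y / d ≤ B * y' / e * c := by
  calc B * (N / D) * y / d = B * (N / D * y / d) := by ring
    _ ≤ B * (y' / e * c) := mul_le_mul_of_nonneg_left h hB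
    _ = B * y' / e * c := by ring

/-- Geometric decay in `n`, uniform in `k`: after clearing denominators, the difference of the two
sides is a polynomial in `n` and `k` with nonnegative coefficients. -/
lemma wzG_succ_le (n k : ℕ) : wzG (n + 1) k ≤ wzG n k * (1 / 2) := by
  have hB := wzB_pos n k
  unfold wzG
  rw [wzB_succ_left]
  push_cast
  rw [show (2 * ((n : ℝ) + 1) + k + 1) = 2 * n + k + 3 by ring]
  have key : 2 * (((n : ℝ) + 1 / 2) ^ 3 * ((n : ℝ) + k + 1 / 2) ^ 3 *
      (2 * n + k + 1 / 2) * (2 * n + k + 3 / 2)) * wzY (n + 1) k ≤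
      wzY n k * ((n + 1) * (n + k + 1) * (2 * n + k + 2) ^ 3 * (2 * n + k + 3) ^ 3) := by
    unfold wzY
    rw [← sub_nonneg]
    ring_nf
    positivity
  refine mul_term_le hB.le ?_
  rw [div_mul_eq_mul_div, div_div, div_mul_div_comm, div_le_div_iff₀ (by positivity)
    (by positivity)]
  have h3 : (0 : ℝ) ≤ (2 * n + k + 1) ^ 3 := by positivity
  nlinarith [mul_le_mul_of_nonneg_left key h3]

lemma wzG_add_le (m n k : ℕ) : wzG (n + m) k ≤ wzG m k * (1 / 2) ^ n := by
  induction n with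
  | zero => simp
  | succ n ih =>
    have h := wzG_succ_le (n + m) k
    rw [show n + 1 + m = n + m + 1 by ring, pow_succ]
    linarith

/-- The term `n = 1` is negligible against `n = 0` as `k → ∞`; the constant `1000` is not optimal. -/
lemma wzG_one_le (k : ℕ) : wzG 1 k ≤ wzG 0 k * (1000 * (1 / ((k : ℝ) + 1))) := by
  have hB := wzB_pos 0 k
  unfold wzG
  rw [show (1 : ℕ) = 0 + 1 from rfl, wzB_succ_left]
  push_cast
  have key : ((0 + 1 / 2 : ℝ) ^ 3 * (0 + (k : ℝ) + 1 / 2) ^ 3 *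
      (2 * 0 + k + 1 / 2) * (2 * 0 + k + 3 / 2)) * wzY 1 k * (k + 1) ≤
      1000 * wzY 0 k * ((0 + 1) * (0 + k + 1) * (2 * 0 + k + 2) ^ 3 *
        (2 * 1 + k + 1) ^ 3) := by
    unfold wzY
    rw [← sub_nonneg]
    ring_nf
    positivity
  refine mul_term_le hB.le ?_
  rw [mul_one_div, div_mul_eq_mul_div, div_div, div_mul_div_comm, div_le_div_iff₀ (by positivity)
    (by positivity)]
  have h3 : (0 : ℝ) ≤ (2 * 0 + k + 1) ^ 3 := by positivity
  nlinarith [mul_le_mul_of_nonneg_left key h3]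

lemma summable_wzG (k : ℕ) : Summable fun n => wzG n k :=
  Summable.of_nonneg_of_le (fun n => (wzG_pos n k).le) (fun n => wzG_add_le 0 n k)
    (summable_geometric_two.mul_left _)

lemma wzF_le (n k : ℕ) : wzF n k ≤ wzG n k := by
  have hB := wzB_pos n k
  unfold wzF wzG
  rw [mul_comm, mul_div_assoc]
  refine mul_le_mul_of_nonneg_left ?_ hB.le
  rw [le_div_iff₀ (by positivity)]
  unfold wzY
  rw [← sub_nonneg]
  ring_nf
  positivity

lemma tendsto_wzF (k : ℕ) : Tendsto (fun n => wzF n k) atTop (𝓝 0) := by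
  refine squeeze_zero (fun n => ?_) (fun n => wzF_le n k) (summable_wzG k).tendsto_atTop_zero
  have hB := wzB_pos n k
  unfold wzF
  positivity

/-- Summing the WZ identity over `n` telescopes the left-hand side to
`lim wzF N k - wzF 0 k = 0`. -/
lemma tsum_wzG_succ (k : ℕ) : ∑' n, wzG n (k + 1) = ∑' n, wzG n k := by
  have h := ((summable_wzG (k + 1)).hasSum.sub (summable_wzG k).hasSum).tendsto_sum_nat
  have h2 : ∀ N, ∑ n ∈ range N, (wzG n (k + 1) - wzG n k) = wzF N k := by
    intro N
    rw [← sum_congr rfl fun n _ => wz_pair n k, sum_range_sub fun n => wzF n k]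
    simp [wzF]
  simp only [h2] at h
  exact sub_eq_zero.mp (tendsto_nhds_unique h (tendsto_wzF k))

lemma tsum_wzG (k : ℕ) : ∑' n, wzG n k = ∑' n, wzG n 0 := by
  induction k with
  | zero => rfl
  | succ k ih => rw [tsum_wzG_succ, ih]

/-- The Wallis product in terms of `(1/2)_k / k!`. -/
lemma wallis_eq (k : ℕ) :
    Real.Wallis.W k * (halfPoch k ^ 2 * (2 * k + 1)) = (k.factorial : ℝ) ^ 2 := by
  induction k with
  | zero => simp [Real.Wallis.W, halfPoch]
  | succ k ih =>
    rw [Real.Wallis.W_succ, halfPoch_succ, Nat.factorial_succ]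
    push_cast
    rw [mul_pow _ (k.factorial : ℝ), mul_pow (halfPoch k), ← ih]
    field_simp
    ring

/-- The factorization `wzY 0 k = 2 (k + 1/2) ^ 4 (k + 3/2)`, written in terms of `1 / (k + 1)`, makes
the limit `k → ∞` visible. -/
lemma wzG_zero_left (k : ℕ) :
    wzG 0 k = (1 - 1 / 2 * (1 / ((k : ℝ) + 1))) ^ 2 * (1 + 1 / 2 * (1 / ((k : ℝ) + 1))) / 2 /
      Real.Wallis.W k ^ 2 := by
  have hW := Real.Wallis.W_pos k
  have hp := halfPoch_pos k
  have hB : wzB 0 k = 1 / (Real.Wallis.W k * (2 * k + 1)) ^ 2 := by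
    have h4 : ((k.factorial : ℝ) ^ 2) ^ 2 = (k.factorial : ℝ) * (k.factorial : ℝ) ^ 3 := by ring
    simp only [wzB, Nat.factorial_zero, mul_zero, zero_add, Nat.cast_one, one_mul]
    rw [← h4, ← wallis_eq]
    rw [show halfPoch 0 = 1 by simp [halfPoch]]
    field_simp
  unfold wzG
  rw [hB]
  unfold wzY
  push_cast
  field_simp
  ring

lemma tendsto_wzG_zero : Tendsto (fun k => wzG 0 k) atTop (𝓝 (2 / Real.pi ^ 2)) := by
  have hu : Tendsto (fun k : ℕ => 1 / 2 * (1 / ((k : ℝ) + 1))) atTop (𝓝 (1 / 2 * 0)) :=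
    tendsto_one_div_add_atTop_nhds_zero_nat.const_mul _
  have hpi := Real.pi_pos
  have h := ((((hu.const_sub 1).pow 2).mul (hu.const_add 1)).div_const 2).div
    (Real.Wallis.tendsto_W_nhds_pi_div_two.pow 2) (by positivity)
  rw [show 2 / Real.pi ^ 2 = (1 - 1 / 2 * 0) ^ 2 * (1 + 1 / 2 * 0) / 2 / (Real.pi / 2) ^ 2 by
    field_simp; norm_num]
  exact h.congr fun k => (wzG_zero_left k).symm

lemma tsum_wzG_zero : ∑' n, wzG n 0 = 2 / Real.pi ^ 2 := by
  have hle : ∀ k, wzG 0 k ≤ ∑' n, wzG n 0 := fun k => by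
    rw [← tsum_wzG k]
    exact (summable_wzG k).le_tsum 0 fun n _ => (wzG_pos n k).le
  have hge : ∀ k : ℕ, ∑' n, wzG n 0 ≤
      wzG 0 k + wzG 0 k * (1000 * (1 / ((k : ℝ) + 1))) * 2 := fun k => by
    rw [← tsum_wzG k, (summable_wzG k).tsum_eq_zero_add]
    have h1 : ∑' n, wzG (n + 1) k ≤ ∑' n : ℕ, wzG 1 k * (1 / 2 : ℝ) ^ n :=
      ((summable_nat_add_iff 1).mpr (summable_wzG k)).tsum_le_tsum
        (fun n => wzG_add_le 1 n k) (summable_geometric_two.mul_left _)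
    rw [tsum_mul_left, tsum_geometric_two] at h1
    linarith [wzG_one_le k]
  have hlim : Tendsto (fun k : ℕ => wzG 0 k + wzG 0 k * (1000 * (1 / ((k : ℝ) + 1))) * 2)
      atTop (𝓝 (2 / Real.pi ^ 2 + 2 / Real.pi ^ 2 * (1000 * 0) * 2)) :=
    tendsto_wzG_zero.add ((tendsto_wzG_zero.mul
      (tendsto_one_div_add_atTop_nhds_zero_nat.const_mul 1000)).mul_const 2)
  rw [mul_zero, mul_zero, zero_mul, add_zero] at hlim
  exact le_antisymm (ge_of_tendsto' hlim hge) (le_of_tendsto' tendsto_wzG_zero hle)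

/-- At `k = 0` the polynomial `wzY` factors as `(2n+1) ^ 3 (120n² + 34n + 3) / 16`. -/
lemma wzG_zero_right (n : ℕ) :
    (120 * (n : ℝ) ^ 2 + 34 * (n : ℝ) + 3) *
        (Nat.choose (4 * n) (2 * n) : ℝ) * (Nat.choose (2 * n) n : ℝ) ^ 4 / 2 ^ (16 * n) =
      16 * wzG n 0 := by
  have hp := eq_div_of_mul_eq (by positivity) (halfPoch_mul n)
  have hp2 := eq_div_of_mul_eq (by positivity) (halfPoch_mul (2 * n))
  rw [show 2 * (2 * n) = 4 * n by ring] at hp2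
  have hc : (Nat.choose (2 * n) n : ℝ) * ((n.factorial : ℝ) * (n.factorial : ℝ))
      = ((2 * n).factorial : ℝ) := by
    have h := Nat.choose_mul_factorial_mul_factorial (show n ≤ 2 * n by lia)
    rw [show 2 * n - n = n by lia, mul_assoc] at h
    exact_mod_cast h
  have hcpos : (0 : ℝ) < (Nat.choose (2 * n) n : ℝ) := by
    exact_mod_cast Nat.choose_pos (show n ≤ 2 * n by lia)
  have hY : wzY n 0 = (2 * n + 1) ^ 3 * (120 * (n : ℝ) ^ 2 + 34 * (n : ℝ) + 3) / 16 := by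
    unfold wzY
    ring
  have h16 : (2 : ℝ) ^ (16 * n) = (4 ^ n) ^ 8 := by
    rw [← pow_mul, show (4 : ℝ) = 2 ^ 2 by norm_num, ← pow_mul]
    congr 1
    ring
  have h42 : (4 : ℝ) ^ (2 * n) = (4 ^ n) ^ 2 := by rw [← pow_mul, mul_comm]
  have hf : (0 : ℝ) < n.factorial := by positivity
  have h4 : (0 : ℝ) < 4 ^ n := by positivity
  unfold wzG wzB
  simp only [add_zero, Nat.cast_zero]
  rw [hY, hp2, hp, h16, h42, ← hc]
  generalize (4 : ℝ) ^ n = t at *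
  generalize (n.factorial : ℝ) = f at *
  generalize (Nat.choose (2 * n) n : ℝ) = c at *
  field_simp

theorem guillera_one_over_pi_sq :
    ∑' n : ℕ, (120 * (n : ℝ) ^ 2 + 34 * (n : ℝ) + 3) *
        (Nat.choose (4 * n) (2 * n) : ℝ) * (Nat.choose (2 * n) n : ℝ) ^ 4 / 2 ^ (16 * n) =
      32 / Real.pi ^ 2 := by
  simp only [wzG_zero_right]
  rw [tsum_mul_left, tsum_wzG_zero]
  ring
end

section
/- ∑_{n=1}^∞ ((224n⁴ + 88n³ − 66n² − n + 1) / ((4n+1)(2n+1)·n·(2n−1)³·(4n−1))) · ((−1)^n · C(2n,n)) / (C(3n,n)·2^{4n}) = 4·log 2 − 3. -/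
/-!
The proof exhibits a Wilf–Zeilberger pair `(F, G)`. It comes from the well-poised `₅F₄` summand of
Dougall with parameters `a = 1`, `b = -n`, `c = d = 1/2 - n` and summation index `k + n`. For integers
`n ≥ 0` and `k ≥ 1` this gives

`F n k = a n * (2k + 2n + 1) / ((k)_{2n+2} * ((k + 1/2)_{2n+1})²)`,

and `G n k` is a rational multiple of `F n k` with `F (n+1) k - F n k = G n (k+1) - G n k` (`wz`).
In the formal definitions both are indexed by `j = k - 1 ≥ 0`.

Put `S n = ∑_{k ≥ 1} F n k`. Since `G n k → 0` as `k → ∞`, summing over `k` gives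
`S (n+1) - S n = -G n 1`, and `-G n 1` is the term of index `n + 1` of the series in question
(`term_eq`). The bound `|F (n+1) k| ≤ |F n k| / 2` (`abs_F_succ_le`) forces `S n → 0` geometrically,
so the series telescopes to `-S 0`. Finally `F 0 k = 1 / (k (k+1) (2k+1))`, whose sum is
`3 - 4 log 2` by partial fractions and the asymptotics of the harmonic numbers (`hasSum_F_zero`).
-/

namespace FourLogTwo

open Filter Topology Finset
open scoped Nat

/-! ### Rising factorials -/

/-- The Pochhammer symbol `(x)_m = x (x + 1) ⋯ (x + m - 1)`. -/
noncomputable def P (x : ℝ) (m : ℕ) : ℝ := ∏ i ∈ range m, (x + i)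

lemma P_succ (x : ℝ) (m : ℕ) : P x (m + 1) = P x m * (x + m) := prod_range_succ _ _

lemma P_succ_left (x : ℝ) (m : ℕ) : P x (m + 1) = x * P (x + 1) m := by
  unfold P
  rw [prod_range_succ']
  push_cast
  rw [mul_comm]
  congr 1
  · ring
  · exact prod_congr rfl fun i _ => by ring

lemma P_pos {x : ℝ} (hx : 0 < x) (m : ℕ) : 0 < P x m :=
  prod_pos fun i _ => by positivity

lemma P_one (m : ℕ) : P 1 m = (m ! : ℝ) := by
  induction m with
  | zero => simp [P]
  | succ m ih => rw [P_succ, ih, Nat.factorial_succ]; push_cast; ring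

lemma pow_le_P {x : ℝ} (hx : 0 < x) (m : ℕ) : x ^ m ≤ P x m := by
  induction m with
  | zero => simp [P]
  | succ m ih =>
    rw [P_succ, pow_succ]
    exact mul_le_mul ih (by simp) hx.le (P_pos hx m).le

/-! ### The Wilf–Zeilberger pair -/

/-- The factor of the summand `F` that does not depend on `k`, normalised so that
`F 0 k = 1 / (k (k+1) (2k+1))`. -/
noncomputable def a (n : ℕ) : ℝ :=
  (-1) ^ n / 4 * ((2 * n)! : ℝ) ^ 3 / (16 ^ n * (n ! : ℝ) * ((3 * n)! : ℝ)) * P (3 / 2) (2 * n) ^ 2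

lemma a_succ (n : ℕ) :
    a (n + 1) = -a n * ((2 * n + 3 / 2) ^ 2 * (2 * n + 5 / 2) ^ 2 * (2 * n + 1) * (2 * n + 2)
      * (n + 1 / 2) ^ 2) / (3 * (3 * n + 1) * (3 * n + 2)) := by
  unfold a
  rw [show 2 * (n + 1) = 2 * n + 1 + 1 by ring, show 3 * (n + 1) = 3 * n + 1 + 1 + 1 by ring,
    P_succ, P_succ]
  simp only [Nat.factorial_succ]
  push_cast
  field_simp
  ring

/-- The polynomial in the numerator of the certificate `G`: the solution, of degree `5` in `k`, of
Gosper's equation for `F (n+1) k - F n k`. -/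
noncomputable def y (n k : ℝ) : ℝ :=
  ((3584 * n ^ 6 + 14336 * n ^ 5 + 23424 * n ^ 4 + 19984 * n ^ 3 + 9370 * n ^ 2 + 2283 * n + 225)
    + (8576 * n ^ 5 + 28320 * n ^ 4 + 36696 * n ^ 3 + 23290 * n ^ 2 + 7224 * n + 873) * k
    + (7776 * n ^ 4 + 20352 * n ^ 3 + 19638 * n ^ 2 + 8268 * n + 1278) * k ^ 2
    + (3504 * n ^ 3 + 6840 * n ^ 2 + 4398 * n + 930) * k ^ 3
    + (792 * n ^ 2 + 1032 * n + 336) * k ^ 4 + (72 * n + 48) * k ^ 5) / 8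

/-- The Wilf–Zeilberger summand at `k = j + 1`. -/
noncomputable def F (n j : ℕ) : ℝ :=
  a n * (2 * j + 2 * n + 3) / (P (j + 1) (2 * n + 2) * P (j + 3 / 2) (2 * n + 1) ^ 2)

/-- The Wilf–Zeilberger mate of `F` at `k = j + 1`. -/
noncomputable def G (n j : ℕ) : ℝ :=
  a n * y n (j + 1) / (3 * (3 * n + 1) * (3 * n + 2))
    / (P (j + 1) (2 * n + 3) * P (j + 3 / 2) (2 * n + 2) ^ 2)

lemma F_succ (n j : ℕ) :
    F (n + 1) j = F n j * (-((2 * n + 3 / 2) ^ 2 * (2 * n + 5 / 2) ^ 2 * (2 * n + 1) * (2 * n + 2)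
      * (n + 1 / 2) ^ 2 * (2 * j + 2 * n + 5)) / (3 * (3 * n + 1) * (3 * n + 2) * (2 * j + 2 * n + 3)
      * (j + 2 * n + 3) * (j + 2 * n + 4) * (j + 2 * n + 5 / 2) ^ 2 * (j + 2 * n + 7 / 2) ^ 2)) := by
  unfold F
  rw [a_succ, show 2 * (n + 1) + 2 = 2 * n + 2 + 1 + 1 by ring,
    show 2 * (n + 1) + 1 = 2 * n + 1 + 1 + 1 by ring,
    P_succ (j + 1) (2 * n + 2 + 1), P_succ (j + 1) (2 * n + 2), P_succ (j + 3 / 2) (2 * n + 1 + 1),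
    P_succ (j + 3 / 2) (2 * n + 1)]
  have h1 := (P_pos (x := (j : ℝ) + 1) (by positivity) (2 * n + 2)).ne'
  have h2 := (P_pos (x := (j : ℝ) + 3 / 2) (by positivity) (2 * n + 1)).ne'
  set p := P ((j : ℝ) + 1) (2 * n + 2)
  set q := P ((j : ℝ) + 3 / 2) (2 * n + 1)
  push_cast
  have e1 : (j : ℝ) + 1 + (2 * n + 2) = j + 2 * n + 3 := by ring
  have e2 : (j : ℝ) + 1 + (2 * n + 2 + 1) = j + 2 * n + 4 := by ring
  have e3 : (j : ℝ) + 3 / 2 + (2 * n + 1) = j + 2 * n + 5 / 2 := by ring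
  have e4 : (j : ℝ) + 3 / 2 + (2 * n + 1 + 1) = j + 2 * n + 7 / 2 := by ring
  rw [e1, e2, e3, e4]
  field_simp
  ring

lemma wz (n j : ℕ) : F (n + 1) j - F n j = G n (j + 1) - G n j := by
  rw [F_succ]
  unfold F G
  have s1 := P_succ_left ((j : ℝ) + 1) (2 * n + 3)
  have s2 := P_succ_left ((j : ℝ) + 3 / 2) (2 * n + 2)
  have t1 := P_succ ((j : ℝ) + 1) (2 * n + 3)
  have t1' := P_succ ((j : ℝ) + 1) (2 * n + 2)
  have t2 := P_succ ((j : ℝ) + 3 / 2) (2 * n + 2)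
  have t2' := P_succ ((j : ℝ) + 3 / 2) (2 * n + 1)
  have h1 := (P_pos (x := (j : ℝ) + 1) (by positivity) (2 * n + 2)).ne'
  have h2 := (P_pos (x := (j : ℝ) + 3 / 2) (by positivity) (2 * n + 1)).ne'
  have u1 : P ((j + 1 : ℕ) + 1 : ℝ) (2 * n + 3) = P ((j : ℝ) + 1) (2 * n + 2)
      * (j + 2 * n + 3) * (j + 2 * n + 4) / (j + 1) := by
    rw [eq_div_iff (by positivity)]
    push_cast at *
    rw [mul_comm, ← s1, t1, t1']
    ring
  have u2 : P ((j + 1 : ℕ) + 3 / 2 : ℝ) (2 * n + 2) = P ((j : ℝ) + 3 / 2) (2 * n + 1)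
      * (j + 2 * n + 5 / 2) * (j + 2 * n + 7 / 2) / (j + 3 / 2) := by
    rw [eq_div_iff (by positivity)]
    push_cast at *
    rw [show (j : ℝ) + 1 + 3 / 2 = j + 3 / 2 + 1 by ring, mul_comm, ← s2, t2, t2']
    ring
  have v1 : P ((j : ℝ) + 1) (2 * n + 3) = P ((j : ℝ) + 1) (2 * n + 2) * (j + 2 * n + 3) := by
    rw [t1']; push_cast; ring
  have v2 : P ((j : ℝ) + 3 / 2) (2 * n + 2)
      = P ((j : ℝ) + 3 / 2) (2 * n + 1) * (j + 2 * n + 5 / 2) := by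
    rw [t2']; push_cast; ring
  rw [u1, u2, v1, v2]
  clear u1 u2 v1 v2 s1 s2 t1 t1' t2 t2'
  set p := P ((j : ℝ) + 1) (2 * n + 2)
  set q := P ((j : ℝ) + 3 / 2) (2 * n + 1)
  unfold y
  push_cast
  field_simp
  ring

/-! ### Summation over `k` -/

/-- The ratio `F (n+1) k / F n k` is an explicit rational function, bounded by comparing its linear
factors one by one. -/
lemma abs_F_succ_le (n j : ℕ) : |F (n + 1) j| ≤ 1 / 2 * |F n j| := by
  rw [F_succ, abs_mul, mul_comm]
  refine mul_le_mul_of_nonneg_right ?_ (abs_nonneg _)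
  rw [neg_div, abs_neg, abs_of_nonneg (by positivity), div_le_iff₀ (by positivity)]
  have hn : (0 : ℝ) ≤ n := n.cast_nonneg
  have hj : (0 : ℝ) ≤ j := j.cast_nonneg
  generalize (n : ℝ) = n at *
  generalize (j : ℝ) = j at *
  have key : 2 * ((n + 1 / 2) ^ 2 * (2 * j + 2 * n + 5))
      ≤ 3 * (3 * n + 1) * (3 * n + 2) * (2 * j + 2 * n + 3) := by
    rw [← sub_nonneg]
    ring_nf
    positivity
  calc _ = 1 / 2 * ((2 * ((n + 1 / 2) ^ 2 * (2 * j + 2 * n + 5))) * (2 * n + 1) * (2 * n + 2)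
          * (2 * n + 3 / 2) ^ 2 * (2 * n + 5 / 2) ^ 2) := by ring
    _ ≤ 1 / 2 * ((3 * (3 * n + 1) * (3 * n + 2) * (2 * j + 2 * n + 3)) * (j + 2 * n + 3)
          * (j + 2 * n + 4) * (j + 2 * n + 5 / 2) ^ 2 * (j + 2 * n + 7 / 2) ^ 2) := by
        gcongr ?_ * (?_ * ?_ * ?_ * ?_ ^ 2 * ?_ ^ 2) <;> linarith
    _ = _ := by ring

lemma F_zero (j : ℕ) : F 0 j = 1 / ((j + 1) * (j + 2) * (2 * j + 3)) := by
  have e : (j : ℝ) + 1 + 1 = j + 2 := by ring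
  simp only [F, a, P, prod_range_succ, prod_range_zero, mul_zero, zero_add]
  simp
  rw [e]
  field_simp
  ring

/-- Partial sums of `F 0` in terms of harmonic numbers, from
`1 / (k (k+1) (2k+1)) = 1 / k + 1 / (k+1) - 4 / (2k+1)`. -/
lemma sum_F_zero (K : ℕ) : ∑ j ∈ range K, F 0 j
    = 4 * (harmonic K : ℝ) - 4 * (harmonic (2 * K + 1) : ℝ) + 3 + 1 / (K + 1) := by
  induction K with
  | zero => simp [harmonic_succ]; norm_num
  | succ K ih =>
    rw [sum_range_succ, ih, F_zero, show 2 * (K + 1) + 1 = 2 * K + 1 + 1 + 1 by ring,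
      harmonic_succ K, harmonic_succ (2 * K + 1 + 1), harmonic_succ (2 * K + 1)]
    push_cast
    field_simp
    ring

lemma hasSum_F_zero : HasSum (F 0) (3 - 4 * Real.log 2) := by
  rw [hasSum_iff_tendsto_nat_of_nonneg (fun j => by rw [F_zero]; positivity)]
  have h1 := Real.tendsto_harmonic_sub_log
  have h2 : Tendsto (fun K : ℕ => 2 * K + 1) atTop atTop :=
    tendsto_atTop_mono (fun K => show id K ≤ 2 * K + 1 by simp only [id]; omega) tendsto_id
  have h3 := h1.comp h2
  have h4 : Tendsto (fun K : ℕ => 1 / ((K : ℝ) + 1)) atTop (𝓝 0) :=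
    tendsto_one_div_add_atTop_nhds_zero_nat
  have h5 : Tendsto (fun K : ℕ => 2 + 1 / (K : ℝ)) atTop (𝓝 (2 + 0)) :=
    tendsto_const_nhds.add tendsto_one_div_atTop_nhds_zero_nat
  have h6 := h5.log (by norm_num)
  have h7 := ((((h1.sub h3).const_mul 4).sub (h6.const_mul 4)).add_const 3).add h4
  have h8 : 4 * (Real.eulerMascheroniConstant - Real.eulerMascheroniConstant)
      - 4 * Real.log (2 + 0) + 3 + 0 = 3 - 4 * Real.log 2 := by
    rw [add_zero (2 : ℝ)]; ring
  rw [h8] at h7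
  refine h7.congr' ?_
  filter_upwards [eventually_gt_atTop 0] with K hK
  have hK' : (0 : ℝ) < K := by exact_mod_cast hK
  have : Real.log (2 + 1 / (K : ℝ)) = Real.log (2 * K + 1) - Real.log K := by
    rw [← Real.log_div (by positivity) hK'.ne']
    congr 1
    field_simp
  rw [sum_F_zero]
  simp only [Function.comp_apply]
  rw [this]
  push_cast
  ring

lemma abs_F_le (n j : ℕ) : |F n j| ≤ (1 / 2) ^ n * F 0 j := by
  induction n with
  | zero => rw [pow_zero, one_mul, abs_of_nonneg]; rw [F_zero]; positivity
  | succ n ih =>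
    calc _ ≤ 1 / 2 * |F n j| := abs_F_succ_le n j
      _ ≤ 1 / 2 * ((1 / 2) ^ n * F 0 j) := by gcongr
      _ = _ := by ring

lemma summable_F (n : ℕ) : Summable (F n) :=
  .of_norm_bounded (hasSum_F_zero.summable.mul_left ((1 / 2) ^ n)) fun j => abs_F_le n j

/-- The sum of the Wilf–Zeilberger summand over `k ≥ 1`. -/
noncomputable def S (n : ℕ) : ℝ := ∑' j, F n j

lemma S_zero : S 0 = 3 - 4 * Real.log 2 := hasSum_F_zero.tsum_eq

lemma abs_S_le (n : ℕ) : ‖S n‖ ≤ (1 / 2) ^ n * (3 - 4 * Real.log 2) :=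
  tsum_of_norm_bounded (hasSum_F_zero.mul_left _) fun j => abs_F_le n j

lemma summable_S : Summable S :=
  .of_norm_bounded ((summable_geometric_of_lt_one (by norm_num) (by norm_num)).mul_right _) abs_S_le

lemma tendsto_G (n : ℕ) : Tendsto (G n) atTop (𝓝 0) := by
  have h0 : Tendsto (fun j : ℕ => 1 / ((j : ℝ) + 1)) atTop (𝓝 0) :=
    tendsto_one_div_add_atTop_nhds_zero_nat
  have h1 := h0.const_mul (|a n| * y n 1 / (3 * (3 * n + 1) * (3 * n + 2)))
  rw [mul_zero] at h1
  refine squeeze_zero_norm (fun j => ?_) h1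
  have hk : (1 : ℝ) ≤ j + 1 := by simp
  -- the coefficients of `y` are nonnegative and its degree in `k` is `5`
  have hy : y n (j + 1) ≤ y n 1 * (j + 1) ^ 5 := by
    unfold y
    have e (i : ℕ) (hi : i ≤ 5) : ((j : ℝ) + 1) ^ i ≤ (j + 1) ^ 5 := pow_le_pow_right₀ hk hi
    have e0 : 1 ≤ ((j : ℝ) + 1) ^ 5 := one_le_pow₀ hk
    have e1 : (j : ℝ) + 1 ≤ (j + 1) ^ 5 := by simpa using e 1 (by norm_num)
    have e2 := e 2 (by norm_num)
    have e3 := e 3 (by norm_num)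
    have e4 := e 4 (by norm_num)
    generalize ((j : ℝ) + 1) ^ 5 = z at *
    generalize ((j : ℝ) + 1) ^ 2 = z2 at *
    generalize ((j : ℝ) + 1) ^ 3 = z3 at *
    generalize ((j : ℝ) + 1) ^ 4 = z4 at *
    generalize (j : ℝ) + 1 = z1 at *
    have f0 := mul_le_mul_of_nonneg_left e0 (show 0 ≤ 3584 * (n : ℝ) ^ 6 + 14336 * n ^ 5
      + 23424 * n ^ 4 + 19984 * n ^ 3 + 9370 * n ^ 2 + 2283 * n + 225 by positivity)
    have f1 := mul_le_mul_of_nonneg_left e1 (show 0 ≤ 8576 * (n : ℝ) ^ 5 + 28320 * n ^ 4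
      + 36696 * n ^ 3 + 23290 * n ^ 2 + 7224 * n + 873 by positivity)
    have f2 := mul_le_mul_of_nonneg_left e2 (show 0 ≤ 7776 * (n : ℝ) ^ 4 + 20352 * n ^ 3
      + 19638 * n ^ 2 + 8268 * n + 1278 by positivity)
    have f3 := mul_le_mul_of_nonneg_left e3 (show 0 ≤ 3504 * (n : ℝ) ^ 3 + 6840 * n ^ 2
      + 4398 * n + 930 by positivity)
    have f4 := mul_le_mul_of_nonneg_left e4 (show 0 ≤ 792 * (n : ℝ) ^ 2 + 1032 * n + 336 by
      positivity)
    linarith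
  have hy0 : 0 ≤ y n (j + 1) := by unfold y; positivity
  have hp : ((j : ℝ) + 1) ^ 3 ≤ P (j + 1) (2 * n + 3) :=
    (pow_le_pow_right₀ hk (by omega)).trans (pow_le_P (by positivity) _)
  have hq : ((j : ℝ) + 1) ^ 2 ≤ P (j + 3 / 2) (2 * n + 2) :=
    calc ((j : ℝ) + 1) ^ 2 ≤ ((j : ℝ) + 3 / 2) ^ 2 := by gcongr; norm_num
      _ ≤ ((j : ℝ) + 3 / 2) ^ (2 * n + 2) := pow_le_pow_right₀ (by linarith) (by omega)
      _ ≤ _ := pow_le_P (by positivity) _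
  have hd : ((j : ℝ) + 1) ^ 6 ≤ P (j + 1) (2 * n + 3) * P (j + 3 / 2) (2 * n + 2) ^ 2 :=
    calc ((j : ℝ) + 1) ^ 6 ≤ (j + 1) ^ 7 := pow_le_pow_right₀ hk (by norm_num)
      _ = (j + 1) ^ 3 * ((j + 1) ^ 2) ^ 2 := by ring
      _ ≤ _ := by
        have := P_pos (x := (j : ℝ) + 1) (by positivity) (2 * n + 3)
        gcongr
  have hd0 : 0 < P (j + 1) (2 * n + 3) * P (j + 3 / 2) (2 * n + 2) ^ 2 :=
    lt_of_lt_of_le (by positivity) hd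
  calc ‖G n j‖ = |a n| * y n (j + 1) / (3 * (3 * n + 1) * (3 * n + 2))
        / (P (j + 1) (2 * n + 3) * P (j + 3 / 2) (2 * n + 2) ^ 2) := by
        unfold G
        rw [Real.norm_eq_abs, abs_div, abs_of_pos hd0, abs_div, abs_mul, abs_of_nonneg hy0,
          abs_of_pos (show (0 : ℝ) < 3 * (3 * n + 1) * (3 * n + 2) by positivity)]
    _ ≤ |a n| * (y n 1 * (j + 1) ^ 5) / (3 * (3 * n + 1) * (3 * n + 2)) / (j + 1) ^ 6 := by
        gcongr
        exact div_nonneg (mul_nonneg (abs_nonneg _) (hy0.trans hy)) (by positivity)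
    _ = _ := by field_simp

/-! ### The telescoping series -/

/-- The Wilf–Zeilberger relation summed over `k`. -/
lemma S_succ (n : ℕ) : S (n + 1) - S n = -G n 0 := by
  have h1 := ((summable_F (n + 1)).hasSum.sub (summable_F n).hasSum).tendsto_sum_nat
  have h2 : Tendsto (fun K => G n K - G n 0) atTop (𝓝 (0 - G n 0)) :=
    (tendsto_G n).sub_const _
  have h3 (K : ℕ) : ∑ j ∈ range K, (F (n + 1) j - F n j) = G n K - G n 0 := by
    rw [sum_congr rfl fun j _ => wz n j, sum_range_sub]
  rw [zero_sub] at h2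
  exact tendsto_nhds_unique (h1.congr h3) h2

lemma hasSum_S_diff : HasSum (fun n => S (n + 1) - S n) (4 * Real.log 2 - 3) := by
  have h := ((hasSum_nat_add_iff' 1).2 summable_S.hasSum).sub summable_S.hasSum
  rw [sum_range_one, S_zero, sub_right_comm, sub_self, zero_sub, neg_sub] at h
  exact h

lemma choose_div (n : ℕ) : (Nat.choose (2 * n) n : ℝ) / (Nat.choose (3 * n) n : ℝ)
    = ((2 * n)! : ℝ) ^ 2 / ((n ! : ℝ) * ((3 * n)! : ℝ)) := by
  rw [Nat.cast_choose ℝ (show n ≤ 2 * n by omega), Nat.cast_choose ℝ (show n ≤ 3 * n by omega),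
    show 2 * n - n = n by omega, show 3 * n - n = 2 * n by omega]
  field_simp

/-- The boundary value of the certificate at `k = 1` is the summand of the series, up to sign. -/
lemma term_eq (m : ℕ) :
    (fun n : ℕ =>
        ((224 * (n : ℝ) ^ 4 + 88 * (n : ℝ) ^ 3 - 66 * (n : ℝ) ^ 2 - (n : ℝ) + 1)
            / ((4 * (n : ℝ) + 1) * (2 * (n : ℝ) + 1) * (n : ℝ) * (2 * (n : ℝ) - 1) ^ 3
                * (4 * (n : ℝ) - 1))) *
          ((-1 : ℝ) ^ n * (Nat.choose (2 * n) n : ℝ)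
            / ((Nat.choose (3 * n) n : ℝ) * 2 ^ (4 * n)))) (m + 1) = -G m 0 := by
  beta_reduce
  rw [show ∀ x y z w : ℝ, x * y / (z * w) = x / w * (y / z) from fun x y z w => by ring,
    choose_div]
  unfold G a y
  rw [Nat.cast_zero, zero_add, zero_add, P_one, P_succ, P_succ, pow_mul,
    show 2 * (m + 1) = 2 * m + 1 + 1 by ring, show 3 * (m + 1) = 3 * m + 1 + 1 + 1 by ring]
  have hq := (P_pos (x := 3 / 2) (by norm_num) (2 * m)).ne'
  simp only [Nat.factorial_succ]
  push_cast
  have e1 : 2 * ((m : ℝ) + 1) - 1 = 2 * m + 1 := by ring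
  have e2 : 4 * ((m : ℝ) + 1) - 1 = 4 * m + 3 := by ring
  have e3 : (3 / 2 + (2 * m : ℝ)) = (4 * m + 3) / 2 := by ring
  have e4 : (3 / 2 + (2 * m + 1 : ℝ)) = (4 * m + 5) / 2 := by ring
  have e5 : 4 * ((m : ℝ) + 1) + 1 = 4 * m + 5 := by ring
  have e6 : 2 * ((m : ℝ) + 1) + 1 = 2 * m + 3 := by ring
  rw [e1, e2, e3, e4, e5, e6, show (2 : ℝ) ^ 4 = 16 by norm_num, pow_succ, pow_succ]
  field_simp
  ring

end FourLogTwo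


theorem four_log_two_sub_three :
    ∑' m : ℕ, (fun n : ℕ =>
        ((224 * (n : ℝ) ^ 4 + 88 * (n : ℝ) ^ 3 - 66 * (n : ℝ) ^ 2 - (n : ℝ) + 1)
            / ((4 * (n : ℝ) + 1) * (2 * (n : ℝ) + 1) * (n : ℝ) * (2 * (n : ℝ) - 1) ^ 3
                * (4 * (n : ℝ) - 1))) *
          ((-1 : ℝ) ^ n * (Nat.choose (2 * n) n : ℝ)
            / ((Nat.choose (3 * n) n : ℝ) * 2 ^ (4 * n)))) (m + 1) =
      4 * Real.log 2 - 3 := by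
  simp only [FourLogTwo.term_eq, ← FourLogTwo.S_succ]
  exact FourLogTwo.hasSum_S_diff.tsum_eq
end

section
/- ∑_{n=1}^∞ p(n)/(n³(3n−2)²(3n−1)²(2n−1)·C(5n,3n)²·C(2n,n)) = 3π², where p(n) = 574277n⁶ − 1347180n⁵ + 1274841n⁴ − 621294n³ + 164024n² − 22184n + 1200. -/
/-!
The proof is a Wilf–Zeilberger acceleration of `∑ 1 / (k + 1) ^ 2 = π ^ 2 / 6`. Dougall's bilateral
sum evaluates `∑ Γ(a+k) Γ(b+k) / (Γ(c+k) Γ(d+k))` as a product of Gamma functions; dividing the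
summand by that product (up to periodic factors) and shifting `(a, b, c, d)` along `(2, 4, 5, 5)`
gives the term

  `F n k = (2n+k)! (4n+k)! (3n)!² n!² / ((5n+k+1)!² (4n)!)`,   `F 0 k = 1 / (k+1)²`.

There is a rational multiple `G` of `F`, with certificate `cert`, such that
`F n k - F (n+1) k = G n k - G n (k+1)` (`F_sub_F`). Since `G n k → 0` as `k → ∞`, summing over `k`
gives `∑ₖ F n k - ∑ₖ F (n+1) k = G n 0`. Since `F n k ≤ 1 / (k+n+1)²`, the sums `∑ₖ F n k` tend to
`0`, so summing over `n` gives `∑ₙ G n 0 = ∑ₖ F 0 k = π² / 6`. Finally `18 * G n 0` is the term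
of index `n + 1` of the series.
-/

open Filter Topology

namespace ThreePiSq

/-- The Wilf–Zeilberger term. -/
noncomputable def F (n k : ℕ) : ℝ :=
  ((2 * n + k).factorial * (4 * n + k).factorial * (3 * n).factorial ^ 2 * n.factorial ^ 2 : ℝ) /
    ((5 * n + k + 1).factorial ^ 2 * (4 * n).factorial)

/-- The polynomial numerator of the rational certificate, obtained by Gosper's algorithm:
a polynomial of degree `9` in `y = k` with coefficients in `ℤ[x]`, `x = n`. -/
def cert (x y : ℝ) : ℝ :=
    (64 * x ^ 3 + 144 * x ^ 2 + 104 * x + 24) * y ^ 9 +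
    (2928 * x ^ 4 + 8484 * x ^ 3 + 9020 * x ^ 2 + 4172 * x + 708) * y ^ 8 +
    (59556 * x ^ 5 + 211236 * x ^ 4 + 294952 * x ^ 3 + 202696 * x ^ 2 + 68548 * x + 9124) * y ^ 7 +
    (706887 * x ^ 6 + 2967540 * x ^ 5 + 5121270 * x ^ 4 + 4649640 * x ^ 3 + 2341583 * x ^ 2 +
        619940 * x + 67380) * y ^ 6 +
    (5395548 * x ^ 7 + 26175219 * x ^ 6 + 53750684 * x ^ 5 + 60541430 * x ^ 4 +
        40375404 * x ^ 3 + 15934419 * x ^ 2 + 3443556 * x + 314124) * y ^ 5 +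
    (27465276 * x ^ 8 + 151242522 * x ^ 7 + 360049453 * x ^ 6 + 483748696 * x ^ 5 +
        400978894 * x ^ 4 + 209839246 * x ^ 3 + 67653441 * x ^ 2 + 12275280 * x + 958680) * y ^ 4 +
    (93242688 * x ^ 9 + 574792152 * x ^ 8 + 1556417736 * x ^ 7 + 2428432545 * x ^ 6 +
        2404611608 * x ^ 5 + 1565948054 * x ^ 4 + 670158416 * x ^ 3 + 181571097 * x ^ 2 +
        28229776 * x + 1916376) * y ^ 3 +
    (203590272 * x ^ 10 + 1389468768 * x ^ 9 + 4217756612 * x ^ 8 + 7494763742 * x ^ 7 +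
        8628250188 * x ^ 6 + 6719649156 * x ^ 5 + 3582422412 * x ^ 4 + 1289780766 * x ^ 3 +
        299788276 * x ^ 2 + 40568608 * x + 2423280) * y ^ 2 +
    (259438080 * x ^ 11 + 1942661760 * x ^ 10 + 6535416256 * x ^ 9 + 13031607304 * x ^ 8 +
        17102764684 * x ^ 7 + 15501512308 * x ^ 6 + 9893789544 * x ^ 5 + 4442731584 * x ^ 4 +
        1374094796 * x ^ 3 + 278448452 * x ^ 2 + 33223040 * x + 1764992) * y +
    (147014912 * x ^ 12 + 1198778496 * x ^ 11 + 4428328432 * x ^ 10 + 9794271144 * x ^ 9 +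
        14437002632 * x ^ 8 + 14931970088 * x ^ 7 + 11104013896 * x ^ 6 + 5977303032 * x ^ 5 +
        2309534840 * x ^ 4 + 624017016 * x ^ 3 + 111776872 * x ^ 2 + 11900224 * x + 568416)

/-- The Wilf–Zeilberger mate of `F`. -/
noncomputable def G (n k : ℕ) : ℝ :=
  cert n k / ((4 * n + 1) * (4 * n + 2) * (4 * n + 3) * (4 * n + 4) *
    ((5 * n + k + 2) * (5 * n + k + 3) * (5 * n + k + 4) * (5 * n + k + 5)) ^ 2) * F n k

lemma F_nonneg (n k : ℕ) : 0 ≤ F n k := by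
  unfold F; positivity

lemma F_succ_right (n k : ℕ) :
    F n (k + 1) = (2 * n + k + 1) * (4 * n + k + 1) / (5 * n + k + 2) ^ 2 * F n k := by
  unfold F
  rw [show 2 * n + (k + 1) = (2 * n + k) + 1 by ring,
    show 4 * n + (k + 1) = (4 * n + k) + 1 by ring,
    show 5 * n + (k + 1) + 1 = (5 * n + k + 1) + 1 by ring]
  simp only [Nat.factorial_succ (2 * n + k), Nat.factorial_succ (4 * n + k),
    Nat.factorial_succ (5 * n + k + 1)]
  push_cast
  have h1 : (5 * n + k + 2 : ℝ) ≠ 0 := by positivity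
  have h2 : (5 * n + k + 1 + 1 : ℝ) ≠ 0 := by positivity
  field_simp
  ring

lemma factorial_three_mul_succ (n : ℕ) :
    ((3 * (n + 1)).factorial : ℝ) =
    (3 * n + 1) * (3 * n + 2) * (3 * n + 3) * (3 * n).factorial := by
  rw [show 3 * (n + 1) = 3 * n + 1 + 1 + 1 by ring]
  simp only [Nat.factorial_succ (3 * n + 1 + 1), Nat.factorial_succ (3 * n + 1),
    Nat.factorial_succ (3 * n)]
  push_cast; ring

lemma F_succ_left (n k : ℕ) :
    F (n + 1) k =
      ((2 * n + k + 1) * (2 * n + k + 2) * (4 * n + k + 1) * (4 * n + k + 2) * (4 * n + k + 3) *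
        (4 * n + k + 4) * ((3 * n + 1) * (3 * n + 2) * (3 * n + 3)) ^ 2 * (n + 1) ^ 2) /
      (((5 * n + k + 2) * (5 * n + k + 3) * (5 * n + k + 4) * (5 * n + k + 5) *
        (5 * n + k + 6)) ^ 2 *
        ((4 * n + 1) * (4 * n + 2) * (4 * n + 3) * (4 * n + 4))) * F n k := by
  have e2 : ((2 * (n + 1) + k).factorial : ℝ) =
      (2 * n + k + 1) * (2 * n + k + 2) * (2 * n + k).factorial := by
    rw [show 2 * (n + 1) + k = 2 * n + k + 1 + 1 by ring]
    simp only [Nat.factorial_succ (2 * n + k + 1), Nat.factorial_succ (2 * n + k)]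
    push_cast; ring
  have e4 (j : ℕ) : ((4 * (n + 1) + j).factorial : ℝ) =
      (4 * n + j + 1) * (4 * n + j + 2) * (4 * n + j + 3) * (4 * n + j + 4) *
        (4 * n + j).factorial := by
    rw [show 4 * (n + 1) + j = 4 * n + j + 1 + 1 + 1 + 1 by ring]
    simp only [Nat.factorial_succ (4 * n + j + 1 + 1 + 1), Nat.factorial_succ (4 * n + j + 1 + 1),
      Nat.factorial_succ (4 * n + j + 1), Nat.factorial_succ (4 * n + j)]
    push_cast; ring
  have e3 := factorial_three_mul_succ n
  have e5 : ((5 * (n + 1) + k + 1).factorial : ℝ) =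
      (5 * n + k + 2) * (5 * n + k + 3) * (5 * n + k + 4) * (5 * n + k + 5) * (5 * n + k + 6) *
        (5 * n + k + 1).factorial := by
    rw [show 5 * (n + 1) + k + 1 = 5 * n + k + 1 + 1 + 1 + 1 + 1 + 1 by ring]
    simp only [Nat.factorial_succ (5 * n + k + 1 + 1 + 1 + 1 + 1),
      Nat.factorial_succ (5 * n + k + 1 + 1 + 1 + 1), Nat.factorial_succ (5 * n + k + 1 + 1 + 1),
      Nat.factorial_succ (5 * n + k + 1 + 1), Nat.factorial_succ (5 * n + k + 1)]
    push_cast; ring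
  have e1 : ((n + 1).factorial : ℝ) = (n + 1) * n.factorial := by
    simp only [Nat.factorial_succ n]
    push_cast; ring
  have e4' := e4 0
  simp only [Nat.cast_zero, add_zero] at e4'
  unfold F
  rw [e2, e4, e3, e5, e1, e4', div_mul_div_comm]
  congr 1 <;> ring

/-- Gosper's equation for the certificate, with denominators cleared. -/
lemma cert_identity (x y : ℝ) :
    cert x y * (5 * x + y + 6) ^ 2 - cert x (y + 1) * (2 * x + y + 1) * (4 * x + y + 1) =
      (4 * x + 1) * (4 * x + 2) * (4 * x + 3) * (4 * x + 4) *
        ((5 * x + y + 2) * (5 * x + y + 3) * (5 * x + y + 4) * (5 * x + y + 5) *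
          (5 * x + y + 6)) ^ 2 -
      (2 * x + y + 1) * (2 * x + y + 2) * (4 * x + y + 1) * (4 * x + y + 2) * (4 * x + y + 3) *
        (4 * x + y + 4) * ((3 * x + 1) * (3 * x + 2) * (3 * x + 3)) ^ 2 * (x + 1) ^ 2 := by
  unfold cert
  ring

lemma F_sub_F (n k : ℕ) : F n k - F (n + 1) k = G n k - G n (k + 1) := by
  have key := cert_identity n k
  unfold G
  rw [F_succ_left, F_succ_right]
  push_cast
  have hD : ((4 * n + 1) * (4 * n + 2) * (4 * n + 3) * (4 * n + 4) : ℝ) ≠ 0 := by positivity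
  have h2 : (5 * n + k + 2 : ℝ) ≠ 0 := by positivity
  have h3 : (5 * n + k + 3 : ℝ) ≠ 0 := by positivity
  have h4 : (5 * n + k + 4 : ℝ) ≠ 0 := by positivity
  have h5 : (5 * n + k + 5 : ℝ) ≠ 0 := by positivity
  have h6 : (5 * n + k + 6 : ℝ) ≠ 0 := by positivity
  rw [show (5 * n + (k + 1) + 2 : ℝ) = 5 * n + k + 3 by ring,
    show (5 * n + (k + 1) + 3 : ℝ) = 5 * n + k + 4 by ring,
    show (5 * n + (k + 1) + 4 : ℝ) = 5 * n + k + 5 by ring,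
    show (5 * n + (k + 1) + 5 : ℝ) = 5 * n + k + 6 by ring]
  -- Treating the linear factors as atoms keeps the degree of the cleared identity low.
  generalize F n k = X
  generalize ((4 * n + 1) * (4 * n + 2) * (4 * n + 3) * (4 * n + 4) : ℝ) = D at *
  generalize cert n k = s at *
  generalize cert n (k + 1) = s' at *
  generalize (5 * n + k + 2 : ℝ) = a2 at *
  generalize (5 * n + k + 3 : ℝ) = a3 at *
  generalize (5 * n + k + 4 : ℝ) = a4 at *
  generalize (5 * n + k + 5 : ℝ) = a5 at *
  generalize (5 * n + k + 6 : ℝ) = a6 at *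
  generalize hB : ((2 * n + k + 1) * (2 * n + k + 2) * (4 * n + k + 1) * (4 * n + k + 2) *
    (4 * n + k + 3) * (4 * n + k + 4) * ((3 * n + 1) * (3 * n + 2) * (3 * n + 3)) ^ 2 *
    (n + 1) ^ 2 : ℝ) = B at *
  clear hB
  generalize (2 * n + k + 1 : ℝ) = u at *
  generalize (4 * n + k + 1 : ℝ) = v at *
  field_simp
  linear_combination (-X) * key

/-- In fact `F n k ≤ 1 / (5n+k+1)²`, as `F n k * (5n+k+1)²` is the reciprocal of the product of the
binomial coefficients `C(5n+k, 3n)`, `C(5n+k, n)` and `C(4n, n)`. -/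
lemma F_le (n k : ℕ) : F n k ≤ 1 / ((k + n : ℕ) + 1 : ℝ) ^ 2 := by
  have h1 : (2 * n + k).factorial * (3 * n).factorial ≤ (5 * n + k).factorial := by
    have := Nat.le_of_dvd (Nat.factorial_pos _)
      (Nat.factorial_mul_factorial_dvd_factorial_add (2 * n + k) (3 * n))
    rwa [show 2 * n + k + 3 * n = 5 * n + k by ring] at this
  have h2 : (4 * n + k).factorial * n.factorial ≤ (5 * n + k).factorial := by
    have := Nat.le_of_dvd (Nat.factorial_pos _)
      (Nat.factorial_mul_factorial_dvd_factorial_add (4 * n + k) n)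
    rwa [show 4 * n + k + n = 5 * n + k by ring] at this
  have h3 : (3 * n).factorial * n.factorial ≤ (4 * n).factorial := by
    have := Nat.le_of_dvd (Nat.factorial_pos _)
      (Nat.factorial_mul_factorial_dvd_factorial_add (3 * n) n)
    rwa [show 3 * n + n = 4 * n by ring] at this
  have h : (2 * n + k).factorial * (4 * n + k).factorial * (3 * n).factorial ^ 2 *
      n.factorial ^ 2 ≤ (5 * n + k).factorial * (5 * n + k).factorial * (4 * n).factorial :=
    calc _ = ((2 * n + k).factorial * (3 * n).factorial) * ((4 * n + k).factorial * n.factorial) *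
          ((3 * n).factorial * n.factorial) := by ring
      _ ≤ _ := by gcongr
  have hR : ((2 * n + k).factorial * (4 * n + k).factorial * (3 * n).factorial ^ 2 *
      n.factorial ^ 2 : ℝ) ≤ (5 * n + k).factorial * (5 * n + k).factorial *
        (4 * n).factorial := by exact_mod_cast h
  unfold F
  rw [Nat.factorial_succ, div_le_div_iff₀ (by positivity) (by positivity)]
  push_cast
  have h5 : ((k + n + 1) ^ 2 : ℝ) ≤ (5 * n + k + 1) ^ 2 := by
    gcongr ?_ ^ 2
    have : (0 : ℝ) ≤ n := by positivity
    linarith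
  calc _ ≤ ((5 * n + k).factorial * (5 * n + k).factorial * (4 * n).factorial : ℝ) *
        (5 * n + k + 1) ^ 2 := by gcongr
    _ = _ := by ring

lemma summable_inv_sq : Summable fun k : ℕ => 1 / ((k : ℝ) + 1) ^ 2 := by
  have := (summable_nat_add_iff 1).2 (Real.summable_one_div_nat_pow.2 one_lt_two)
  simpa using this

lemma summable_F (n : ℕ) : Summable (F n) :=
  Summable.of_nonneg_of_le (F_nonneg n) (F_le n)
    ((summable_nat_add_iff (f := fun k : ℕ => 1 / ((k : ℝ) + 1) ^ 2) n).2 summable_inv_sq)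

lemma tendsto_tsum_F : Tendsto (fun n => ∑' k, F n k) atTop (𝓝 0) := by
  refine squeeze_zero (fun n => tsum_nonneg (F_nonneg n)) (fun n => ?_)
    (tendsto_sum_nat_add (fun k : ℕ => 1 / ((k : ℝ) + 1) ^ 2))
  exact (summable_F n).tsum_le_tsum (F_le n)
    ((summable_nat_add_iff (f := fun k : ℕ => 1 / ((k : ℝ) + 1) ^ 2) n).2 summable_inv_sq)

lemma cert_nonneg {x y : ℝ} (hx : 0 ≤ x) (hy : 0 ≤ y) : 0 ≤ cert x y := by
  unfold cert; positivity

/-- The coefficients of `cert x y` as a polynomial of degree `9` in `y` are nonnegative, and they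
sum to `cert x 1`. -/
lemma cert_le {x y : ℝ} (hx : 0 ≤ x) (hy : 0 ≤ y) : cert x y ≤ cert x 1 * (y + 1) ^ 9 := by
  have hp (j : ℕ) (hj : j ≤ 9) {c : ℝ} (hc : 0 ≤ c) : c * y ^ j ≤ c * (y + 1) ^ 9 := by
    refine mul_le_mul_of_nonneg_left ?_ hc
    calc y ^ j ≤ (y + 1) ^ j := by gcongr; linarith
      _ ≤ (y + 1) ^ 9 := pow_le_pow_right₀ (by linarith) hj
  have gen {c₀ c₁ c₂ c₃ c₄ c₅ c₆ c₇ c₈ c₉ : ℝ} (h₀ : 0 ≤ c₀) (h₁ : 0 ≤ c₁) (h₂ : 0 ≤ c₂)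
      (h₃ : 0 ≤ c₃) (h₄ : 0 ≤ c₄) (h₅ : 0 ≤ c₅) (h₆ : 0 ≤ c₆) (h₇ : 0 ≤ c₇) (h₈ : 0 ≤ c₈)
      (h₉ : 0 ≤ c₉) :
      c₉ * y ^ 9 + c₈ * y ^ 8 + c₇ * y ^ 7 + c₆ * y ^ 6 + c₅ * y ^ 5 + c₄ * y ^ 4 + c₃ * y ^ 3 +
        c₂ * y ^ 2 + c₁ * y + c₀ ≤
      (c₉ * 1 ^ 9 + c₈ * 1 ^ 8 + c₇ * 1 ^ 7 + c₆ * 1 ^ 6 + c₅ * 1 ^ 5 + c₄ * 1 ^ 4 + c₃ * 1 ^ 3 +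
        c₂ * 1 ^ 2 + c₁ * 1 + c₀) * (y + 1) ^ 9 := by
    have := hp 0 (by norm_num) h₀
    have := hp 1 (by norm_num) h₁
    linarith [hp 2 (by norm_num) h₂, hp 3 (by norm_num) h₃, hp 4 (by norm_num) h₄,
      hp 5 (by norm_num) h₅, hp 6 (by norm_num) h₆, hp 7 (by norm_num) h₇,
      hp 8 (by norm_num) h₈, hp 9 (by norm_num) h₉]
  unfold cert
  apply gen <;> positivity

/-- The bound `F n k ≤ (k + 1) ^ (-2)` suffices: the denominator of `G` grows at least like `k ^ 8`
and `cert` like `k ^ 9`, so `G n k = O(1 / k)`. -/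
lemma tendsto_G (n : ℕ) : Tendsto (G n) atTop (𝓝 0) := by
  have hG (k : ℕ) : G n k ≤ cert n 1 * (1 / ((k : ℝ) + 1)) := by
    have hk : (0 : ℝ) ≤ k := by positivity
    have hn : (0 : ℝ) ≤ n := by positivity
    have hF : F n k ≤ 1 / ((k : ℝ) + 1) ^ 2 := by
      refine (F_le n k).trans ?_
      push_cast
      gcongr
      linarith
    have hden : ((k + 1) ^ 8 : ℝ) ≤ (4 * n + 1) * (4 * n + 2) * (4 * n + 3) * (4 * n + 4) *
        ((5 * n + k + 2) * (5 * n + k + 3) * (5 * n + k + 4) * (5 * n + k + 5)) ^ 2 := by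
      calc ((k + 1) ^ 8 : ℝ) = 1 * 1 * 1 * 1 * ((k + 1) * (k + 1) * (k + 1) * (k + 1)) ^ 2 := by ring
        _ ≤ _ := by gcongr <;> linarith
    have hc := cert_nonneg hn hk
    have hc1 := cert_nonneg hn zero_le_one
    calc G n k ≤ (cert n 1 * (k + 1) ^ 9) / (k + 1) ^ 8 * (1 / ((k : ℝ) + 1) ^ 2) := by
          unfold G
          have := F_nonneg n k
          gcongr
          exact cert_le hn hk
      _ = _ := by field_simp
  have h0 : Tendsto (fun k : ℕ => cert n 1 * (1 / ((k : ℝ) + 1))) atTop (𝓝 0) := by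
    simpa using tendsto_one_div_add_atTop_nhds_zero_nat.const_mul (cert n 1)
  refine squeeze_zero (fun k => ?_) hG h0
  have := F_nonneg n k
  have := cert_nonneg (x := n) (y := k) (by positivity) (by positivity)
  unfold G
  positivity

lemma tsum_F_sub (n : ℕ) : ∑' k, F n k - ∑' k, F (n + 1) k = G n 0 := by
  have h : HasSum (fun k => F n k - F (n + 1) k) (∑' k, F n k - ∑' k, F (n + 1) k) :=
    (summable_F n).hasSum.sub (summable_F (n + 1)).hasSum
  refine tendsto_nhds_unique h.tendsto_sum_nat ?_
  simp only [F_sub_F, Finset.sum_range_sub']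
  simpa using (tendsto_G n).const_sub (G n 0)

lemma tsum_F_zero : ∑' k, F 0 k = Real.pi ^ 2 / 6 := by
  have h := (hasSum_nat_add_iff' (f := fun k : ℕ => 1 / (k : ℝ) ^ 2) 1).2 hasSum_zeta_two
  simp only [Finset.range_one, Finset.sum_singleton, Nat.cast_zero] at h
  rw [show Real.pi ^ 2 / 6 - 1 / (0 : ℝ) ^ 2 = Real.pi ^ 2 / 6 by simp] at h
  rw [← h.tsum_eq]
  refine tsum_congr fun k => ?_
  have hk : (k.factorial : ℝ) ≠ 0 := by positivity
  simp only [F, mul_zero, zero_add, Nat.factorial_succ, Nat.factorial_zero]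
  push_cast
  field_simp

lemma hasSum_G : HasSum (fun n => G n 0) (Real.pi ^ 2 / 6) := by
  rw [hasSum_iff_tendsto_nat_of_nonneg]
  · simp only [← tsum_F_sub, Finset.sum_range_sub', tsum_F_zero]
    simpa using tendsto_tsum_F.const_sub (Real.pi ^ 2 / 6)
  · intro n
    have := F_nonneg n 0
    have := cert_nonneg (x := n) (y := (0 : ℕ)) (by positivity) (by positivity)
    unfold G
    positivity

/-- At `y = 0` the certificate factors, the sextic factor being the numerator of the series
at `n = x + 1`. -/
lemma cert_zero (x : ℝ) : cert x 0 =
    (4 * x + 1) * (4 * x + 2) * (4 * x + 3) * (4 * x + 4) * (x + 1) ^ 2 *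
      (574277 * (x + 1) ^ 6 - 1347180 * (x + 1) ^ 5 + 1274841 * (x + 1) ^ 4
        - 621294 * (x + 1) ^ 3 + 164024 * (x + 1) ^ 2 - 22184 * (x + 1) + 1200) := by
  unfold cert
  ring

/-- The binomial denominator of the series at `n + 1` in terms of the factorials at `n`. -/
lemma choose_eq (n : ℕ) :
    ((5 * (n + 1)).choose (3 * (n + 1)) : ℝ) ^ 2 * ((2 * (n + 1)).choose (n + 1) : ℝ) =
      ((5 * n + 2) * (5 * n + 3) * (5 * n + 4) * (5 * n + 5) * (5 * n + 1).factorial) ^ 2 /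
        (((3 * n + 1) * (3 * n + 2) * (3 * n + 3) * (3 * n).factorial) ^ 2 *
          ((2 * n + 1) * (2 * n + 2) * (2 * n).factorial) * ((n + 1) * n.factorial) ^ 2) := by
  have e5 : ((5 * (n + 1)).factorial : ℝ) =
      (5 * n + 2) * (5 * n + 3) * (5 * n + 4) * (5 * n + 5) * (5 * n + 1).factorial := by
    rw [show 5 * (n + 1) = 5 * n + 1 + 1 + 1 + 1 + 1 by ring]
    simp only [Nat.factorial_succ (5 * n + 1 + 1 + 1 + 1), Nat.factorial_succ (5 * n + 1 + 1 + 1),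
      Nat.factorial_succ (5 * n + 1 + 1), Nat.factorial_succ (5 * n + 1)]
    push_cast; ring
  have e3 := factorial_three_mul_succ n
  have e2 : ((2 * (n + 1)).factorial : ℝ) = (2 * n + 1) * (2 * n + 2) * (2 * n).factorial := by
    rw [show 2 * (n + 1) = 2 * n + 1 + 1 by ring]
    simp only [Nat.factorial_succ (2 * n + 1), Nat.factorial_succ (2 * n)]
    push_cast; ring
  have e1 : ((n + 1).factorial : ℝ) = (n + 1) * n.factorial := by
    simp only [Nat.factorial_succ n]
    push_cast; ring
  have c5 : ((5 * (n + 1)).choose (3 * (n + 1)) : ℝ) =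
      (5 * (n + 1)).factorial / ((3 * (n + 1)).factorial * (2 * (n + 1)).factorial) := by
    rw [Nat.cast_choose ℝ (by lia), show 5 * (n + 1) - 3 * (n + 1) = 2 * (n + 1) by lia]
  have c2 : ((2 * (n + 1)).choose (n + 1) : ℝ) =
      (2 * (n + 1)).factorial / ((n + 1).factorial * (n + 1).factorial) := by
    rw [Nat.cast_choose ℝ (by lia), show 2 * (n + 1) - (n + 1) = n + 1 by lia]
  rw [c5, c2, ← e5, ← e3, ← e2, ← e1]
  have := Nat.factorial_pos (3 * (n + 1))
  have := Nat.factorial_pos (2 * (n + 1))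
  have := Nat.factorial_pos (n + 1)
  field_simp

end ThreePiSq

open ThreePiSq in
theorem three_pi_sq_series :
    ∑' m : ℕ, (fun n : ℕ =>
        (574277 * (n : ℝ) ^ 6 - 1347180 * (n : ℝ) ^ 5 + 1274841 * (n : ℝ) ^ 4
            - 621294 * (n : ℝ) ^ 3 + 164024 * (n : ℝ) ^ 2 - 22184 * (n : ℝ) + 1200)
          / ((n : ℝ) ^ 3 * (3 * (n : ℝ) - 2) ^ 2 * (3 * (n : ℝ) - 1) ^ 2 * (2 * (n : ℝ) - 1)
              * (Nat.choose (5 * n) (3 * n) : ℝ) ^ 2 * (Nat.choose (2 * n) n : ℝ))) (m + 1) =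
      3 * Real.pi ^ 2 := by
  rw [show 3 * Real.pi ^ 2 = 18 * (Real.pi ^ 2 / 6) by ring, ← (hasSum_G.mul_left 18).tsum_eq]
  refine tsum_congr fun n => ?_
  simp only [mul_assoc _ (((5 * (n + 1)).choose (3 * (n + 1)) : ℝ) ^ 2), choose_eq, G, F,
    Nat.cast_zero, cert_zero, add_zero]
  push_cast
  generalize (574277 * (n + 1) ^ 6 - 1347180 * (n + 1) ^ 5 + 1274841 * (n + 1) ^ 4
    - 621294 * (n + 1) ^ 3 + 164024 * (n + 1) ^ 2 - 22184 * (n + 1) + 1200 : ℝ) = p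
  rw [show (3 * (n + 1) - 2 : ℝ) = 3 * n + 1 by ring,
    show (3 * (n + 1) - 1 : ℝ) = 3 * n + 2 by ring,
    show (2 * (n + 1) - 1 : ℝ) = 2 * n + 1 by ring]
  field_simp
  ring
end

section
/- ∑_{n=0}^∞ p(n)·(8n+1)·C(8n,4n) / (512·(4n+1)⁵·(4n+3)⁵·C(4n,2n)⁴·C(2n,n)²) = (3/4)·ζ(3), where p(n) = 1397760n⁶ + 5727104n⁵ + 9673968n⁴ + 8600034n³ + 4227785n² + 1083660n + 112149. -/
/-!
The proof is by the Wilf–Zeilberger method with two WZ pairs sharing a boundary term.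

For rational `ρ`, `σ`, `R` let `F (n, k)` be the hypergeometric term with
`F (n + 1, k) = ρ (n, k) F (n, k)` and `F (n, k + 1) = σ (n, k) F (n, k)`, and put `G = R F`.
If `F (n + 1, k) - F (n, k) = G (n, k + 1) - G (n, k)`, then summing over `k` and telescoping over
`n` gives `∑ₙ (G (n, 0) - g n) = ∑ₖ F (0, k)`, where `g n = lim G (n, k)` as `k → ∞`, as soon as
`F` decays geometrically in `n` (`wz_sum`).

* In the first pair `F (0, k) = 1 / (2 k + 1) ^ 3`, so `∑ₖ F (0, k) = 7/8 ζ(3)`, and `G (n, 0)` is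
  the `n`-th term of the series to be summed (`F_mul_R_zero`). The boundary term does not vanish:
  `g n = - (-1) ^ n n! ^ 10 (205 n ^ 2 + 250 n + 77) / (512 (2 n + 1)! ^ 5)`.
* The second pair starts from `FA (0, k) = 2 / (k + 1) ^ 3`, has vanishing boundary term, and
  `FA (n, 0) RA (n, 0) = -16 g n` (`FA_mul_RA_zero`). It therefore proves the Amdeberhan–Zeilberger
  series `∑ₙ (-16 g n) = 2 ζ(3)` (`AZ_sum`).

Hence the sum is `7/8 ζ(3) + ∑ₙ g n = 7/8 ζ(3) - 1/8 ζ(3) = 3/4 ζ(3)`. The two WZ equations are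
identities of rational functions (`wz_cert`, `wz_certA`). They are checked by turning each into a
polynomial identity, with the linear factors generalized to atoms so that denominators can be
cleared.
-/

namespace ZetaThree

open Filter Topology Finset

/-! ### Telescoping a WZ pair, limits of rational functions, and the odd zeta sum -/

/-- Summation of a WZ pair `(F, G)`. The factor `1 / 2` makes `∑ₖ F (n, k)` converge for every
`n` and tend to `0`, while `g n` is the boundary term of `G` at `k = ∞`. -/
theorem wz_sum {F G : ℕ → ℕ → ℝ} {g : ℕ → ℝ} {S : ℝ}
    (hFG : ∀ n k, F (n + 1) k - F n k = G n (k + 1) - G n k)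
    (hG : ∀ n, Tendsto (G n) atTop (𝓝 (g n))) (h0 : HasSum (F 0) S) (hF0 : ∀ k, 0 ≤ F 0 k)
    (hF : ∀ n k, |F (n + 1) k| ≤ 1 / 2 * |F n k|) :
    Tendsto (fun N => ∑ n ∈ range N, (G n 0 - g n)) atTop (𝓝 S) := by
  have hb : ∀ n k, ‖F n k‖ ≤ (1 / 2) ^ n * F 0 k := by
    intro n k
    induction n with
    | zero => simp [abs_of_nonneg (hF0 k)]
    | succ n ih =>
      have := hF n k
      rw [Real.norm_eq_abs] at *
      rw [pow_succ]
      linarith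
  have hs : ∀ n, Summable (F n) := fun n =>
    Summable.of_norm_bounded (h0.summable.mul_left _) (hb n)
  -- Sum the WZ equation over `k`: the right side telescopes to `g n - G n 0`.
  have hstep : ∀ n, G n 0 - g n = ∑' k, F n k - ∑' k, F (n + 1) k := by
    intro n
    have h1 := ((hs (n + 1)).hasSum.sub (hs n).hasSum).tendsto_sum_nat
    simp only [hFG, sum_range_sub] at h1
    have := tendsto_nhds_unique h1 ((hG n).sub_const (G n 0))
    linarith
  have hT : Tendsto (fun n => ∑' k, F n k) atTop (𝓝 0) := by
    have hlim : Tendsto (fun n : ℕ => (1 / 2 : ℝ) ^ n * S) atTop (𝓝 0) := by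
      simpa using (tendsto_pow_atTop_nhds_zero_of_lt_one (r := (1 / 2 : ℝ))
        (by norm_num) (by norm_num)).mul_const S
    refine squeeze_zero_norm (fun n => ?_) hlim
    exact tsum_of_norm_bounded (h0.mul_left _) (hb n)
  have : ∀ N, ∑ n ∈ range N, (G n 0 - g n) = S - ∑' k, F N k := by
    intro N
    rw [sum_congr rfl fun n _ => hstep n, sum_range_sub', h0.tsum_eq]
  simp only [this]
  simpa using hT.const_sub S

theorem hasSum_of_eq {u v : ℕ → ℝ} {a : ℝ} (e : ∀ k, u k = v k) (h : HasSum v a) : HasSum u a :=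
  (funext e : u = v) ▸ h

theorem tendsto_lin (a b : ℝ) :
    Tendsto (fun k : ℕ => (a + b * (k : ℝ)) / k) atTop (𝓝 b) := by
  have h : Tendsto (fun k : ℕ => a * (1 / (k : ℝ)) + b) atTop (𝓝 (a * 0 + b)) :=
    (tendsto_one_div_atTop_nhds_zero_nat.const_mul a).add_const b
  rw [mul_zero, zero_add] at h
  refine h.congr' ?_
  filter_upwards [eventually_ne_atTop 0] with k hk
  have : (k : ℝ) ≠ 0 := by exact_mod_cast hk
  field_simp

/-- A polynomial of degree at most `8` divided by `k ^ 8` tends to its coefficient of `k ^ 8`. -/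
theorem tendsto_poly (a0 a1 a2 a3 a4 a5 a6 a7 a8 : ℝ) :
    Tendsto (fun k : ℕ => (a0 + a1 * (k : ℝ) + a2 * (k : ℝ) ^ 2 + a3 * (k : ℝ) ^ 3
      + a4 * (k : ℝ) ^ 4 + a5 * (k : ℝ) ^ 5 + a6 * (k : ℝ) ^ 6 + a7 * (k : ℝ) ^ 7
      + a8 * (k : ℝ) ^ 8) / (k : ℝ) ^ 8) atTop (𝓝 a8) := by
  have hinv := tendsto_one_div_atTop_nhds_zero_nat (𝕜 := ℝ)
  set f : ℝ → ℝ := fun x => a0 * x ^ 8 + a1 * x ^ 7 + a2 * x ^ 6 + a3 * x ^ 5 + a4 * x ^ 4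
    + a5 * x ^ 3 + a6 * x ^ 2 + a7 * x + a8 with hf
  have hc : ContinuousAt f 0 := by fun_prop
  have h0 : f 0 = a8 := by simp [hf]
  have h := hc.tendsto.comp hinv
  rw [h0] at h
  refine h.congr' ?_
  filter_upwards [eventually_ne_atTop 0] with k hk
  have hk : (k : ℝ) ≠ 0 := by exact_mod_cast hk
  simp only [hf, Function.comp]
  field_simp

/-- The sum over odd integers: the even ones contribute `1 / 8` of the whole. -/
theorem odd_sum {z : ℝ} (hz : HasSum (fun k : ℕ => 1 / ((k : ℝ) + 1) ^ 3) z) :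
    HasSum (fun k : ℕ => 1 / (2 * (k : ℝ) + 1) ^ 3) (7 / 8 * z) := by
  have hs : Summable (fun k : ℕ => 1 / (2 * (k : ℝ) + 1) ^ 3) := by
    refine Summable.of_nonneg_of_le (fun k => by positivity) (fun k => ?_) hz.summable
    gcongr
    have : (0 : ℝ) ≤ k := by positivity
    linarith
  obtain ⟨s, hs⟩ := hs
  have ho : HasSum (fun k : ℕ => 1 / (((2 * k + 1 : ℕ) : ℝ) + 1) ^ 3) (1 / 8 * z) := by
    refine hasSum_of_eq (fun k => ?_) (hz.mul_left (1 / 8))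
    have : (k : ℝ) + 1 ≠ 0 := by positivity
    have e : (((2 * k + 1 : ℕ) : ℝ) + 1) = 2 * (k + 1) := by push_cast; ring
    rw [e]; field_simp; norm_num
  have he : HasSum (fun k : ℕ => 1 / (((2 * k : ℕ) : ℝ) + 1) ^ 3) s := by
    push_cast; exact hs
  have := (HasSum.even_add_odd (f := fun k : ℕ => 1 / ((k : ℝ) + 1) ^ 3) he ho).unique hz
  have : s = 7 / 8 * z := by linarith
  rwa [this] at hs

/-! ### The first WZ pair -/

/-- The polynomial factor in the numerator of the certificate `R`. -/
def W (n k : ℝ) : ℝ :=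
  (22364160 * n ^ 10 + 136361984 * n ^ 9 + 371597056 * n ^ 8 + 595800096 * n ^ 7
        + 622235472 * n ^ 6 + 442147344 * n ^ 5 + 216412584 * n ^ 4 + 72018922 * n ^ 3
        + 15588641 * n ^ 2 + 1980852 * n + 112149)
    + (83865600 * n ^ 9 + 458619904 * n ^ 8 + 1107475392 * n ^ 7 + 1549661568 * n ^ 6
        + 1384434528 * n ^ 5 + 818750880 * n ^ 4 + 320474844 * n ^ 3 + 80043104 * n ^ 2
        + 11573388 * n + 737928) * k
    + (137456640 * n ^ 8 + 665684864 * n ^ 7 + 1401881728 * n ^ 6 + 1676514816 * n ^ 5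
        + 1245102240 * n ^ 4 + 587941160 * n ^ 3 + 172354144 * n ^ 2 + 28673096 * n + 2072176) * k ^ 2
    + (128743680 * n ^ 7 + 543640064 * n ^ 6 + 978397184 * n ^ 5 + 972691200 * n ^ 4
        + 576814320 * n ^ 3 + 203988160 * n ^ 2 + 39824304 * n + 3310048) * k ^ 3
    + (75413760 * n ^ 6 + 272168704 * n ^ 5 + 407374720 * n ^ 4 + 323636960 * n ^ 3
        + 143896480 * n ^ 2 + 33939360 * n + 3316064) * k ^ 4
    + (28297728 * n ^ 5 + 84953600 * n ^ 4 + 101693248 * n ^ 3 + 60661760 * n ^ 2 + 18026560 * n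
        + 2133888) * k ^ 5
    + (6643200 * n ^ 4 + 15955840 * n ^ 3 + 14360576 * n ^ 2 + 5738880 * n + 858880) * k ^ 6
    + (892160 * n ^ 3 + 1612800 * n ^ 2 + 975104 * n + 197120) * k ^ 7
    + (52480 * n ^ 2 + 64000 * n + 19712) * k ^ 8

/-- The ratio `F (n + 1, k) / F (n, k)` of the first pair. -/
noncomputable def ρ (n k : ℝ) : ℝ :=
  -((n + 1) ^ 5 * (4 + 3 * n + 2 * k) * (2 * n + 2 * k + 1) ^ 5
      * ((8 * n + 2 * k + 3) * (8 * n + 2 * k + 5) * (8 * n + 2 * k + 7) * (8 * n + 2 * k + 9))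
      * (2 * k - 2 * n - 1))
    / (32 * (2 * n + 1) ^ 5 * (1 + 3 * n + 2 * k) * (4 * n + 2 * k + 3) ^ 5
      * (4 * n + 2 * k + 5) ^ 5)

/-- The ratio `F (n, k + 1) / F (n, k)` of the first pair. -/
noncomputable def σ (n k : ℝ) : ℝ :=
  (3 + 3 * n + 2 * k) * (2 * n + 2 * k + 1) ^ 5 * (8 * n + 2 * k + 3)
    / ((1 + 3 * n + 2 * k) * (4 * n + 2 * k + 3) ^ 5 * (2 * k - 2 * n + 1))

/-- The rational certificate `G (n, k) / F (n, k)` of the first pair. -/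
noncomputable def R (n k : ℝ) : ℝ :=
  -(2 * k - 2 * n - 1) * W n k
    / (512 * (2 * n + 1) ^ 5 * (1 + 3 * n + 2 * k) * (4 * n + 2 * k + 3) ^ 5)

/-- The WZ equation of the first pair, divided by `F (n, k)`. -/
theorem wz_cert (n k : ℝ) (hn : 0 ≤ n) (hk : 0 ≤ k) (h : 2 * k - 2 * n + 1 ≠ 0) :
    ρ n k - 1 = σ n k * R n (k + 1) - R n k := by
  have hW : -16 * ((n + 1) ^ 5 * (4 + 3 * n + 2 * k) * (2 * n + 2 * k + 1) ^ 5
      * ((8 * n + 2 * k + 3) * (8 * n + 2 * k + 5) * (8 * n + 2 * k + 7) * (8 * n + 2 * k + 9))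
      * (2 * k - 2 * n - 1)) - 512 * ((2 * n + 1) ^ 5 * (1 + 3 * n + 2 * k)
        * (4 * n + 2 * k + 3) ^ 5 * (4 * n + 2 * k + 5) ^ 5)
      = -(2 * n + 2 * k + 1) ^ 5 * (8 * n + 2 * k + 3) * W n (k + 1)
        + (4 * n + 2 * k + 5) ^ 5 * (2 * k - 2 * n - 1) * W n k := by
    unfold W; ring
  have h1 : 2 * n + 1 ≠ 0 := by positivity
  have h2 : 1 + 3 * n + 2 * k ≠ 0 := by positivity
  have h3 : 4 * n + 2 * k + 3 ≠ 0 := by positivity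
  have h4 : 4 * n + 2 * k + 5 ≠ 0 := by positivity
  have h5 : 3 + 3 * n + 2 * k ≠ 0 := by positivity
  have e1 : 2 * (k + 1) - 2 * n - 1 = 2 * k - 2 * n + 1 := by ring
  have e2 : 1 + 3 * n + 2 * (k + 1) = 3 + 3 * n + 2 * k := by ring
  have e3 : 4 * n + 2 * (k + 1) + 3 = 4 * n + 2 * k + 5 := by ring
  unfold ρ σ R
  rw [e1, e2, e3]
  generalize W n k = w0 at *
  generalize W n (k + 1) = w1 at *
  generalize 2 * n + 1 = a1 at *
  generalize 1 + 3 * n + 2 * k = a2 at *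
  generalize 4 * n + 2 * k + 3 = a3 at *
  generalize 4 * n + 2 * k + 5 = a4 at *
  generalize 3 + 3 * n + 2 * k = a5 at *
  generalize 2 * k - 2 * n + 1 = a6 at *
  generalize 2 * k - 2 * n - 1 = a7 at *
  generalize 2 * n + 2 * k + 1 = a8 at *
  generalize (8 * n + 2 * k + 3) = a9 at *
  generalize (n + 1) = a10 at *
  generalize (4 + 3 * n + 2 * k) = a11 at *
  generalize (8 * n + 2 * k + 5) = a12 at *
  generalize (8 * n + 2 * k + 7) = a13 at *
  generalize (8 * n + 2 * k + 9) = a14 at *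
  field_simp
  linear_combination 32 * hW

/-- Compatibility of the two ratios: both sides are `F (n + 1, k + 1) / F (n, k)`. -/
theorem σ_mul_ρ (n k : ℝ) (hn : 0 ≤ n) (hk : 0 ≤ k) (h : 2 * k - 2 * n + 1 ≠ 0)
   (h' : 2 * k - 2 * n - 1 ≠ 0) :
    ρ n (k + 1) * σ n k = σ (n + 1) k * ρ n k := by
  have h1 : 2 * n + 1 ≠ 0 := by positivity
  have h2 : 1 + 3 * n + 2 * k ≠ 0 := by positivity
  have h3 : 4 * n + 2 * k + 3 ≠ 0 := by positivity
  have h4 : 4 * n + 2 * k + 5 ≠ 0 := by positivity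
  have h5 : 3 + 3 * n + 2 * k ≠ 0 := by positivity
  have h6 : 4 * n + 2 * k + 7 ≠ 0 := by positivity
  have h7 : 4 + 3 * n + 2 * k ≠ 0 := by positivity
  have e1 : 2 * (k + 1) - 2 * n - 1 = 2 * k - 2 * n + 1 := by ring
  have e2 : 1 + 3 * n + 2 * (k + 1) = 3 + 3 * n + 2 * k := by ring
  have e3 : 4 * n + 2 * (k + 1) + 3 = 4 * n + 2 * k + 5 := by ring
  have e4 : 4 * n + 2 * (k + 1) + 5 = 4 * n + 2 * k + 7 := by ring
  have e5 : 1 + 3 * (n + 1) + 2 * k = 4 + 3 * n + 2 * k := by ring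
  have e6 : 4 * (n + 1) + 2 * k + 3 = 4 * n + 2 * k + 7 := by ring
  have e7 : 2 * k - 2 * (n + 1) + 1 = 2 * k - 2 * n - 1 := by ring
  unfold ρ σ
  rw [e1, e2, e3, e4, e5, e6, e7]
  have e8 : 2 * n + 2 * (k + 1) + 1 = 2 * n + 2 * k + 3 := by ring
  have e9 : 2 * (n + 1) + 2 * k + 1 = 2 * n + 2 * k + 3 := by ring
  have e10 : 8 * (n + 1) + 2 * k + 3 = 8 * n + 2 * k + 11 := by ring
  have e11 : 8 * n + 2 * (k + 1) + 3 = 8 * n + 2 * k + 5 := by ring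
  have e12 : 8 * n + 2 * (k + 1) + 5 = 8 * n + 2 * k + 7 := by ring
  have e13 : 8 * n + 2 * (k + 1) + 7 = 8 * n + 2 * k + 9 := by ring
  have e14 : 8 * n + 2 * (k + 1) + 9 = 8 * n + 2 * k + 11 := by ring
  have e15 : 4 + 3 * n + 2 * (k + 1) = 6 + 3 * n + 2 * k := by ring
  have e16 : 3 + 3 * (n + 1) + 2 * k = 6 + 3 * n + 2 * k := by ring
  rw [e8, e9, e10, e11, e12, e13, e14, e15, e16]
  generalize 2 * n + 1 = a1 at *
  generalize 1 + 3 * n + 2 * k = a2 at *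
  generalize 4 * n + 2 * k + 3 = a3 at *
  generalize 4 * n + 2 * k + 5 = a4 at *
  generalize 4 * n + 2 * k + 7 = a4' at *
  generalize 3 + 3 * n + 2 * k = a5 at *
  generalize 2 * k - 2 * n + 1 = a6 at *
  generalize 2 * k - 2 * n - 1 = a7 at *
  generalize 2 * n + 2 * k + 1 = a8 at *
  generalize 4 + 3 * n + 2 * k = a11 at *
  generalize 8 * n + 2 * k + 3 = a9 at *
  field_simp

/-- The bound holds with `625 / 2048`: each of the four factors `8 n + 2 k + 3, …, 8 n + 2 k + 9` is
paired with a factor `2 n + 2 k + 1`, and such a product is at most `5 / 4` of the corresponding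
product in the denominator. -/
theorem abs_ρ_le (n k : ℝ) (hn : 0 ≤ n) (hk : 0 ≤ k) : |ρ n k| ≤ 1 / 2 := by
  unfold ρ
  rw [abs_div, abs_neg, abs_mul, abs_of_nonneg (a := _ * _) (by positivity),
    abs_of_nonneg (a := _ * _) (by positivity), div_le_iff₀ (by positivity)]
  have h1 : |2 * k - 2 * n - 1| ≤ 4 * n + 2 * k + 3 := abs_le.2 ⟨by linarith, by linarith⟩
  have h2 : (2 * n + 2 * k + 1) * (8 * n + 2 * k + 9)
      ≤ 5 / 4 * ((4 * n + 2 * k + 3) * (4 * n + 2 * k + 5)) := by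
    nlinarith [mul_nonneg hn hk, sq_nonneg (n - k), sq_nonneg (k - 2 * n), sq_nonneg n, sq_nonneg k]
  have h3 : (8 * n + 2 * k + 3) * (8 * n + 2 * k + 5) * (8 * n + 2 * k + 7) * (8 * n + 2 * k + 9)
      ≤ (8 * n + 2 * k + 9) ^ 4 := by
    calc _ ≤ (8 * n + 2 * k + 9) * (8 * n + 2 * k + 9) * (8 * n + 2 * k + 9)
          * (8 * n + 2 * k + 9) := by gcongr <;> linarith
      _ = _ := by ring
  calc (n + 1) ^ 5 * (4 + 3 * n + 2 * k) * (2 * n + 2 * k + 1) ^ 5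
      * ((8 * n + 2 * k + 3) * (8 * n + 2 * k + 5) * (8 * n + 2 * k + 7) * (8 * n + 2 * k + 9))
      * |2 * k - 2 * n - 1|
      ≤ (n + 1) ^ 5 * (4 + 3 * n + 2 * k) * (2 * n + 2 * k + 1) ^ 5
      * (8 * n + 2 * k + 9) ^ 4 * (4 * n + 2 * k + 3) := by gcongr
    _ = (n + 1) ^ 5 * (4 + 3 * n + 2 * k) * (2 * n + 2 * k + 1)
      * ((2 * n + 2 * k + 1) * (8 * n + 2 * k + 9)) ^ 4 * (4 * n + 2 * k + 3) := by ring
    _ ≤ (2 * n + 1) ^ 5 * (4 * (1 + 3 * n + 2 * k)) * (4 * n + 2 * k + 5)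
      * (5 / 4 * ((4 * n + 2 * k + 3) * (4 * n + 2 * k + 5))) ^ 4 * (4 * n + 2 * k + 3) := by
        gcongr <;> linarith
    _ = 625 / 2048 * (32 * (2 * n + 1) ^ 5 * (1 + 3 * n + 2 * k) * (4 * n + 2 * k + 3) ^ 5
      * (4 * n + 2 * k + 5) ^ 5) := by ring
    _ ≤ _ := mul_le_mul_of_nonneg_right (by norm_num) (by positivity)

/-- The factors `2 k - 2 n ± 1` of `ρ` and `σ` can change sign, but they are odd and so never
vanish. -/
theorem odd_ne (n k : ℕ) : 2 * (k : ℝ) - 2 * n + 1 ≠ 0 ∧ 2 * (k : ℝ) - 2 * n - 1 ≠ 0 := by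
  constructor <;> intro h
  · have : 2 * (k : ℤ) - 2 * n + 1 = 0 := by exact_mod_cast h
    omega
  · have : 2 * (k : ℤ) - 2 * n - 1 = 0 := by exact_mod_cast h
    omega

/-- The hypergeometric term of the first pair, defined from its values at `n = 0` by the ratio `ρ`. -/
noncomputable def F (n k : ℕ) : ℝ := (∏ i ∈ range n, ρ i k) * (1 / (2 * (k : ℝ) + 1) ^ 3)

theorem F_succ (n k : ℕ) : F (n + 1) k = ρ n k * F n k := by
  unfold F; rw [prod_range_succ]; ring

theorem F_shift (n k : ℕ) : F n (k + 1) = σ n k * F n k := by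
  induction n with
  | zero =>
    simp only [F, σ, range_zero, prod_empty]
    push_cast
    have : 2 * (k : ℝ) + 1 ≠ 0 := by positivity
    have : 2 * (k : ℝ) + 3 ≠ 0 := by positivity
    have e : 2 * ((k : ℝ) + 1) + 1 = 2 * k + 3 := by ring
    have e1 : (1 : ℝ) + 3 * 0 + 2 * k = 2 * k + 1 := by ring
    have e2 : (3 : ℝ) + 3 * 0 + 2 * k = 2 * k + 3 := by ring
    rw [e, e1, e2]
    simp only [mul_zero, zero_add, sub_zero]
    field_simp
  | succ n ih =>
    rw [F_succ, F_succ, ih]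
    have := σ_mul_ρ n k (by positivity) (by positivity) (odd_ne n k).1 (odd_ne n k).2
    push_cast
    linear_combination this * F n k

/-- The limit of `k ^ 3 F (n, k)` as `k → ∞`, equal to `(-1) ^ n n! ^ 10 / (8 (2 n)! ^ 5)`. -/
noncomputable def c (n : ℕ) : ℝ :=
  (∏ i ∈ range n, -(((i : ℝ) + 1) / (2 * (2 * i + 1))) ^ 5) / 8

theorem c_succ (n : ℕ) : c (n + 1) = -(((n : ℝ) + 1) / (2 * (2 * n + 1))) ^ 5 * c n := by
  unfold c; rw [prod_range_succ]; ring

theorem tendsto_ρ (n : ℕ) :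
    Tendsto (fun k : ℕ => ρ n k) atTop (𝓝 (-(((n : ℝ) + 1) / (2 * (2 * n + 1))) ^ 5)) := by
  have h1 := tendsto_lin (4 + 3 * n) 2
  have h2 := tendsto_lin (2 * n + 1) 2
  have h3 := tendsto_lin (8 * n + 3) 2
  have h4 := tendsto_lin (8 * n + 5) 2
  have h5 := tendsto_lin (8 * n + 7) 2
  have h6 := tendsto_lin (8 * n + 9) 2
  have h7 := tendsto_lin (-2 * n - 1) 2
  have h8 := tendsto_lin (1 + 3 * n) 2
  have h9 := tendsto_lin (4 * n + 3) 2
  have h10 := tendsto_lin (4 * n + 5) 2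
  have hn := ((((h1.mul (h2.pow 5)).mul (((h3.mul h4).mul h5).mul h6)).mul h7).const_mul
    (((n : ℝ) + 1) ^ 5)).neg
  have hd := ((h8.mul (h9.pow 5)).mul (h10.pow 5)).const_mul (32 * (2 * (n : ℝ) + 1) ^ 5)
  have h := hn.div hd (by positivity)
  have e : -(((n : ℝ) + 1) ^ 5 * (2 * 2 ^ 5 * (2 * 2 * 2 * 2) * 2)) /
        (32 * (2 * (n : ℝ) + 1) ^ 5 * (2 * 2 ^ 5 * 2 ^ 5))
      = -(((n : ℝ) + 1) / (2 * (2 * n + 1))) ^ 5 := by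
    have : 2 * (n : ℝ) + 1 ≠ 0 := by positivity
    field_simp
    norm_num
  rw [e] at h
  refine h.congr' ?_
  filter_upwards [eventually_ne_atTop 0] with k hk
  have hk : (k : ℝ) ≠ 0 := by exact_mod_cast hk
  have e1 : 2 * (n : ℝ) + 1 + 2 * k = 2 * n + 2 * k + 1 := by ring
  have e2 : 8 * (n : ℝ) + 3 + 2 * k = 8 * n + 2 * k + 3 := by ring
  have e3 : 8 * (n : ℝ) + 5 + 2 * k = 8 * n + 2 * k + 5 := by ring
  have e4 : 8 * (n : ℝ) + 7 + 2 * k = 8 * n + 2 * k + 7 := by ring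
  have e5 : 8 * (n : ℝ) + 9 + 2 * k = 8 * n + 2 * k + 9 := by ring
  have e6 : -2 * (n : ℝ) - 1 + 2 * k = 2 * k - 2 * n - 1 := by ring
  have e7 : 4 * (n : ℝ) + 3 + 2 * k = 4 * n + 2 * k + 3 := by ring
  have e8 : 4 * (n : ℝ) + 5 + 2 * k = 4 * n + 2 * k + 5 := by ring
  have p1 : 2 * (n : ℝ) + 1 ≠ 0 := by positivity
  have p2 : 1 + 3 * (n : ℝ) + 2 * k ≠ 0 := by positivity
  have p3 : 4 * (n : ℝ) + 2 * k + 3 ≠ 0 := by positivity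
  have p4 : 4 * (n : ℝ) + 2 * k + 5 ≠ 0 := by positivity
  simp only [Pi.div_apply]
  rw [e1, e2, e3, e4, e5, e6, e7, e8]
  unfold ρ
  generalize 2 * (n : ℝ) + 1 = a1 at *
  generalize 1 + 3 * (n : ℝ) + 2 * k = a2 at *
  generalize 4 * (n : ℝ) + 2 * k + 3 = a3 at *
  generalize 4 * (n : ℝ) + 2 * k + 5 = a4 at *
  generalize 2 * (k : ℝ) - 2 * n - 1 = a5 at *
  generalize 2 * (n : ℝ) + 2 * k + 1 = a6 at *
  generalize 4 + 3 * (n : ℝ) + 2 * k = a7 at *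
  field_simp

theorem tendsto_F (n : ℕ) : Tendsto (fun k : ℕ => (k : ℝ) ^ 3 * F n k) atTop (𝓝 (c n)) := by
  induction n with
  | zero =>
    have h := ((tendsto_lin 1 2).pow 3).inv₀ (by norm_num)
    have e : c 0 = (2 ^ 3)⁻¹ := by norm_num [c]
    rw [e]
    refine h.congr' ?_
    filter_upwards [eventually_ne_atTop 0] with k hk
    have hk : (k : ℝ) ≠ 0 := by exact_mod_cast hk
    have : (1 : ℝ) + 2 * k ≠ 0 := by positivity
    have e : 2 * (k : ℝ) + 1 = 1 + 2 * k := by ring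
    simp only [F, range_zero, prod_empty]
    rw [e]
    field_simp
  | succ n ih =>
    rw [c_succ]
    refine ((tendsto_ρ n).mul ih).congr fun k => ?_
    rw [F_succ]; ring

theorem tendsto_R (n : ℕ) : Tendsto (fun k : ℕ => R n k / (k : ℝ) ^ 3) atTop
    (𝓝 (-(205 * (n : ℝ) ^ 2 + 250 * n + 77) / (64 * (2 * n + 1) ^ 5))) := by
  have h7 := tendsto_lin (-2 * n - 1) 2
  have h8 := tendsto_lin (1 + 3 * n) 2
  have h9 := tendsto_lin (4 * n + 3) 2
  have hW : Tendsto (fun k : ℕ => W n k / (k : ℝ) ^ 8) atTop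
      (𝓝 (52480 * (n : ℝ) ^ 2 + 64000 * n + 19712)) := tendsto_poly _ _ _ _ _ _ _ _ _
  have hd := (h8.mul (h9.pow 5)).const_mul (512 * (2 * (n : ℝ) + 1) ^ 5)
  have h := (h7.mul hW).neg.div hd (by positivity)
  have p1 : 2 * (n : ℝ) + 1 ≠ 0 := by positivity
  have e : -(2 * (52480 * (n : ℝ) ^ 2 + 64000 * n + 19712)) /
      (512 * (2 * (n : ℝ) + 1) ^ 5 * (2 * 2 ^ 5))
      = -(205 * (n : ℝ) ^ 2 + 250 * n + 77) / (64 * (2 * n + 1) ^ 5) := by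
    field_simp
    ring
  rw [e] at h
  refine h.congr' ?_
  filter_upwards [eventually_ne_atTop 0] with k hk
  have hk : (k : ℝ) ≠ 0 := by exact_mod_cast hk
  have e6 : -2 * (n : ℝ) - 1 + 2 * k = 2 * k - 2 * n - 1 := by ring
  have e7 : 4 * (n : ℝ) + 3 + 2 * k = 4 * n + 2 * k + 3 := by ring
  have p2 : 1 + 3 * (n : ℝ) + 2 * k ≠ 0 := by positivity
  have p3 : 4 * (n : ℝ) + 2 * k + 3 ≠ 0 := by positivity
  simp only [Pi.div_apply]
  rw [e6, e7]
  unfold R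
  generalize W n k = w at *
  generalize 2 * (n : ℝ) + 1 = a1 at *
  generalize 1 + 3 * (n : ℝ) + 2 * k = a2 at *
  generalize 4 * (n : ℝ) + 2 * k + 3 = a3 at *
  generalize 2 * (k : ℝ) - 2 * n - 1 = a5 at *
  field_simp

/-- The boundary term `lim G (n, k)` as `k → ∞` of the first pair, where `G = R F`. -/
noncomputable def g (n : ℕ) : ℝ :=
  c n * (-(205 * (n : ℝ) ^ 2 + 250 * n + 77) / (64 * (2 * n + 1) ^ 5))

theorem tendsto_G (n : ℕ) : Tendsto (fun k : ℕ => F n k * R n k) atTop (𝓝 (g n)) := by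
  refine ((tendsto_F n).mul (tendsto_R n)).congr' ?_
  filter_upwards [eventually_ne_atTop 0] with k hk
  have hk : (k : ℝ) ≠ 0 := by exact_mod_cast hk
  field_simp

/-- At `k = 0` the hypergeometric term is a quotient of central binomial coefficients. -/
theorem F_zero (n : ℕ) : F n 0 = (3 * n + 1) * (8 * n + 1) * (8 * n).choose (4 * n)
    / ((4 * n + 1) ^ 5 * (4 * n).choose (2 * n) ^ 4 * (2 * n).choose n ^ 2) := by
  have r1 : ∀ n : ℕ, ((2 * n).choose n : ℝ) = n.centralBinom := fun n => by
    rw [Nat.centralBinom_eq_two_mul_choose]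
  have r2 : ∀ n : ℕ, ((4 * n).choose (2 * n) : ℝ) = (2 * n).centralBinom := fun n => by
    rw [Nat.centralBinom_eq_two_mul_choose]; congr 2; ring
  have r3 : ∀ n : ℕ, ((8 * n).choose (4 * n) : ℝ) = (4 * n).centralBinom := fun n => by
    rw [Nat.centralBinom_eq_two_mul_choose]; congr 2; ring
  have step : ∀ m : ℕ, ((m + 1).centralBinom : ℝ)
      = 2 * (2 * m + 1) / (m + 1) * m.centralBinom := by
    intro m
    have h : ((m : ℝ) + 1) * (m + 1).centralBinom = 2 * (2 * m + 1) * m.centralBinom := by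
      exact_mod_cast Nat.succ_mul_centralBinom_succ m
    have : (m : ℝ) + 1 ≠ 0 := by positivity
    field_simp
    linear_combination h
  rw [r1, r2, r3]
  induction n with
  | zero => norm_num [F]
  | succ n ih =>
    have s2 : ((2 * (n + 1)).centralBinom : ℝ)
        = 2 * (4 * n + 3) / (2 * (n + 1)) * (2 * (4 * n + 1) / (2 * n + 1)
          * (2 * n).centralBinom) := by
      rw [show 2 * (n + 1) = 2 * n + 1 + 1 by ring, step, step]; push_cast; ring_nf
    have s4 : ((4 * (n + 1)).centralBinom : ℝ)
        = 2 * (8 * n + 7) / (4 * (n + 1)) * (2 * (8 * n + 5) / (4 * n + 3) *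
          (2 * (8 * n + 3) / (2 * (2 * n + 1)) * (2 * (8 * n + 1) / (4 * n + 1)
          * (4 * n).centralBinom))) := by
      rw [show 4 * (n + 1) = 4 * n + 1 + 1 + 1 + 1 by ring, step, step, step, step]
      push_cast; ring_nf
    have q1 : (n.centralBinom : ℝ) ≠ 0 := by exact_mod_cast n.centralBinom_ne_zero
    have q2 : ((2 * n).centralBinom : ℝ) ≠ 0 := by exact_mod_cast (2 * n).centralBinom_ne_zero
    have q4 : ((4 * n).centralBinom : ℝ) ≠ 0 := by exact_mod_cast (4 * n).centralBinom_ne_zero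
    rw [F_succ, ih, s2, s4, step n]
    have p1 : 2 * (n : ℝ) + 1 ≠ 0 := by positivity
    have p2 : 3 * (n : ℝ) + 1 ≠ 0 := by positivity
    have p3 : 4 * (n : ℝ) + 1 ≠ 0 := by positivity
    have p4 : 4 * (n : ℝ) + 3 ≠ 0 := by positivity
    have p5 : 4 * (n : ℝ) + 5 ≠ 0 := by positivity
    have p6 : (n : ℝ) + 1 ≠ 0 := by positivity
    have e1 : 4 + 3 * (n : ℝ) + 2 * (0 : ℕ) = 3 * n + 4 := by push_cast; ring
    have e2 : 2 * (n : ℝ) + 2 * (0 : ℕ) + 1 = 2 * n + 1 := by push_cast; ring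
    have e3 : 8 * (n : ℝ) + 2 * (0 : ℕ) + 3 = 8 * n + 3 := by push_cast; ring
    have e4 : 8 * (n : ℝ) + 2 * (0 : ℕ) + 5 = 8 * n + 5 := by push_cast; ring
    have e5 : 8 * (n : ℝ) + 2 * (0 : ℕ) + 7 = 8 * n + 7 := by push_cast; ring
    have e6 : 8 * (n : ℝ) + 2 * (0 : ℕ) + 9 = 8 * n + 9 := by push_cast; ring
    have e7 : 2 * ((0 : ℕ) : ℝ) - 2 * n - 1 = -(2 * n + 1) := by push_cast; ring
    have e8 : 1 + 3 * (n : ℝ) + 2 * (0 : ℕ) = 3 * n + 1 := by push_cast; ring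
    have e9 : 4 * (n : ℝ) + 2 * (0 : ℕ) + 3 = 4 * n + 3 := by push_cast; ring
    have e10 : 4 * (n : ℝ) + 2 * (0 : ℕ) + 5 = 4 * n + 5 := by push_cast; ring
    have e11 : 3 * ((n + 1 : ℕ) : ℝ) + 1 = 3 * n + 4 := by push_cast; ring
    have e12 : 8 * ((n + 1 : ℕ) : ℝ) + 1 = 8 * n + 9 := by push_cast; ring
    have e13 : 4 * ((n + 1 : ℕ) : ℝ) + 1 = 4 * n + 5 := by push_cast; ring
    rw [ρ, e1, e2, e3, e4, e5, e6, e7, e8, e9, e10, e11, e12, e13]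
    generalize (n.centralBinom : ℝ) = b1 at *
    generalize ((2 * n).centralBinom : ℝ) = b2 at *
    generalize ((4 * n).centralBinom : ℝ) = b4 at *
    generalize 2 * (n : ℝ) + 1 = a1 at *
    generalize 3 * (n : ℝ) + 1 = a2 at *
    generalize 4 * (n : ℝ) + 1 = a3 at *
    generalize 4 * (n : ℝ) + 3 = a4 at *
    generalize 4 * (n : ℝ) + 5 = a5 at *
    generalize (n : ℝ) + 1 = a6 at *
    field_simp
    norm_num

/-- The value `G (n, 0)` of the first pair is the general term of the series. -/
theorem F_mul_R_zero (n : ℕ) : F n 0 * R n 0 =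
    (1397760 * (n : ℝ) ^ 6 + 5727104 * (n : ℝ) ^ 5 + 9673968 * (n : ℝ) ^ 4
            + 8600034 * (n : ℝ) ^ 3 + 4227785 * (n : ℝ) ^ 2 + 1083660 * (n : ℝ) + 112149)
          * (8 * (n : ℝ) + 1) * (Nat.choose (8 * n) (4 * n) : ℝ)
          / (512 * (4 * (n : ℝ) + 1) ^ 5 * (4 * (n : ℝ) + 3) ^ 5
              * (Nat.choose (4 * n) (2 * n) : ℝ) ^ 4 * (Nat.choose (2 * n) n : ℝ) ^ 2) := by
  have hW : W n (0 : ℝ) = (2 * n + 1) ^ 4 *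
      (1397760 * (n : ℝ) ^ 6 + 5727104 * (n : ℝ) ^ 5 + 9673968 * (n : ℝ) ^ 4
            + 8600034 * (n : ℝ) ^ 3 + 4227785 * (n : ℝ) ^ 2 + 1083660 * (n : ℝ) + 112149) := by
    unfold W; ring
  have e7 : 2 * (0 : ℝ) - 2 * n - 1 = -(2 * n + 1) := by ring
  have e8 : 1 + 3 * (n : ℝ) + 2 * (0 : ℝ) = 3 * n + 1 := by ring
  have e9 : 4 * (n : ℝ) + 2 * (0 : ℝ) + 3 = 4 * n + 3 := by ring
  have p1 : 2 * (n : ℝ) + 1 ≠ 0 := by positivity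
  have p2 : 3 * (n : ℝ) + 1 ≠ 0 := by positivity
  have p3 : 4 * (n : ℝ) + 1 ≠ 0 := by positivity
  have p4 : 4 * (n : ℝ) + 3 ≠ 0 := by positivity
  have q1 : ((2 * n).choose n : ℝ) ≠ 0 := by
    exact_mod_cast (Nat.choose_pos (by omega)).ne'
  have q2 : ((4 * n).choose (2 * n) : ℝ) ≠ 0 := by
    exact_mod_cast (Nat.choose_pos (by omega)).ne'
  rw [F_zero, R, hW, e7, e8, e9]
  generalize (1397760 * (n : ℝ) ^ 6 + 5727104 * (n : ℝ) ^ 5 + 9673968 * (n : ℝ) ^ 4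
            + 8600034 * (n : ℝ) ^ 3 + 4227785 * (n : ℝ) ^ 2 + 1083660 * (n : ℝ) + 112149) = p
  generalize 2 * (n : ℝ) + 1 = a1 at *
  field_simp

/-! ### The Amdeberhan–Zeilberger pair -/

/-- The ratio `FA (n + 1, k) / FA (n, k)` of the second pair. -/
noncomputable def ρA (n k : ℝ) : ℝ :=
  -((n + 1) ^ 5 * (5 + 3 * n + 2 * k) * (n + k + 1) ^ 4)
    / (2 * (2 * n + 1) * (2 + 3 * n + 2 * k) * ((2 * n + k + 2) ^ 4 * (2 * n + k + 3) ^ 4))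

/-- The ratio `FA (n, k + 1) / FA (n, k)` of the second pair. -/
noncomputable def σA (n k : ℝ) : ℝ :=
  (4 + 3 * n + 2 * k) * (n + k + 1) ^ 4 / ((2 + 3 * n + 2 * k) * (2 * n + k + 2) ^ 4)

/-- The polynomial numerator of the certificate `RA`. -/
def WA (n k : ℝ) : ℝ :=
  (205 * n ^ 6 + 1070 * n ^ 5 + 2307 * n ^ 4 + 2628 * n ^ 3 + 1667 * n ^ 2 + 558 * n + 77)
    + (574 * n ^ 5 + 2486 * n ^ 4 + 4268 * n ^ 3 + 3628 * n ^ 2 + 1526 * n + 254) * k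
    + (664 * n ^ 4 + 2288 * n ^ 3 + 2928 * n ^ 2 + 1648 * n + 344) * k ^ 2
    + (408 * n ^ 3 + 1048 * n ^ 2 + 888 * n + 248) * k ^ 3
    + (141 * n ^ 2 + 240 * n + 101) * k ^ 4 + (26 * n + 22) * k ^ 5 + 2 * k ^ 6

/-- The rational certificate `GA (n, k) / FA (n, k)` of the second pair. -/
noncomputable def RA (n k : ℝ) : ℝ :=
  WA n k / (2 * (2 * n + 1) * (2 + 3 * n + 2 * k) * (2 * n + k + 2) ^ 4)

/-- The WZ equation of the second pair, divided by `FA (n, k)`. -/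
theorem wz_certA (n k : ℝ) (hn : 0 ≤ n) (hk : 0 ≤ k) :
    ρA n k - 1 = σA n k * RA n (k + 1) - RA n k := by
  have hW : -((n + 1) ^ 5 * (5 + 3 * n + 2 * k) * (n + k + 1) ^ 4)
      - 2 * (2 * n + 1) * (2 + 3 * n + 2 * k) * ((2 * n + k + 2) ^ 4 * (2 * n + k + 3) ^ 4)
      = (n + k + 1) ^ 4 * WA n (k + 1) - (2 * n + k + 3) ^ 4 * WA n k := by
    unfold WA; ring
  have h1 : 2 * n + 1 ≠ 0 := by positivity
  have h2 : 2 + 3 * n + 2 * k ≠ 0 := by positivity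
  have h3 : 2 * n + k + 2 ≠ 0 := by positivity
  have h4 : 2 * n + k + 3 ≠ 0 := by positivity
  have h5 : 4 + 3 * n + 2 * k ≠ 0 := by positivity
  have e2 : 2 + 3 * n + 2 * (k + 1) = 4 + 3 * n + 2 * k := by ring
  have e3 : 2 * n + (k + 1) + 2 = 2 * n + k + 3 := by ring
  unfold ρA σA RA
  rw [e2, e3]
  generalize WA n k = w0 at *
  generalize WA n (k + 1) = w1 at *
  generalize 2 * n + 1 = a1 at *
  generalize 2 + 3 * n + 2 * k = a2 at *
  generalize 2 * n + k + 2 = a3 at *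
  generalize 2 * n + k + 3 = a4 at *
  generalize 4 + 3 * n + 2 * k = a5 at *
  generalize 5 + 3 * n + 2 * k = a6 at *
  generalize n + k + 1 = a7 at *
  field_simp
  linear_combination hW

theorem σ_mul_ρA (n k : ℝ) (hn : 0 ≤ n) (hk : 0 ≤ k) :
    ρA n (k + 1) * σA n k = σA (n + 1) k * ρA n k := by
  have h1 : 2 * n + 1 ≠ 0 := by positivity
  have h2 : 2 + 3 * n + 2 * k ≠ 0 := by positivity
  have h3 : 2 * n + k + 2 ≠ 0 := by positivity
  have h4 : 2 * n + k + 3 ≠ 0 := by positivity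
  have h5 : 4 + 3 * n + 2 * k ≠ 0 := by positivity
  have h6 : 5 + 3 * n + 2 * k ≠ 0 := by positivity
  have h7 : 2 * n + k + 4 ≠ 0 := by positivity
  have e2 : 2 + 3 * n + 2 * (k + 1) = 4 + 3 * n + 2 * k := by ring
  have e3 : 2 * n + (k + 1) + 2 = 2 * n + k + 3 := by ring
  have e4 : 2 * n + (k + 1) + 3 = 2 * n + k + 4 := by ring
  have e5 : 5 + 3 * n + 2 * (k + 1) = 7 + 3 * n + 2 * k := by ring
  have e6 : 4 + 3 * (n + 1) + 2 * k = 7 + 3 * n + 2 * k := by ring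
  have e7 : 2 + 3 * (n + 1) + 2 * k = 5 + 3 * n + 2 * k := by ring
  have e8 : 2 * (n + 1) + k + 2 = 2 * n + k + 4 := by ring
  have e9 : n + (k + 1) + 1 = n + k + 2 := by ring
  have e10 : n + 1 + k + 1 = n + k + 2 := by ring
  unfold ρA σA
  rw [e2, e3, e4, e5, e6, e7, e8, e9, e10]
  generalize 2 * n + 1 = a1 at *
  generalize 2 + 3 * n + 2 * k = a2 at *
  generalize 2 * n + k + 2 = a3 at *
  generalize 2 * n + k + 3 = a4 at *
  generalize 2 * n + k + 4 = a4' at *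
  generalize 4 + 3 * n + 2 * k = a5 at *
  generalize 5 + 3 * n + 2 * k = a6 at *
  generalize n + k + 1 = a7 at *
  field_simp

theorem abs_ρA_le (n k : ℝ) (hn : 0 ≤ n) (hk : 0 ≤ k) : |ρA n k| ≤ 1 / 2 := by
  unfold ρA
  rw [abs_div, abs_neg, abs_of_nonneg (by positivity), abs_of_nonneg (by positivity),
    div_le_iff₀ (by positivity)]
  calc (n + 1) ^ 5 * (5 + 3 * n + 2 * k) * (n + k + 1) ^ 4
      = (n + 1) * (n + 1) ^ 4 * (5 + 3 * n + 2 * k) * (n + k + 1) ^ 4 := by ring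
    _ ≤ (2 * n + 1) * (2 * n + k + 3) ^ 4 * (4 * (2 + 3 * n + 2 * k)) * (2 * n + k + 2) ^ 4 / 4 := by
      have : (n + 1) ^ 4 ≤ (2 * n + k + 3) ^ 4 / 4 := by
        have : (2 * (n + 1)) ^ 4 ≤ (2 * n + k + 3) ^ 4 := by gcongr; linarith
        have : 0 ≤ (n + 1) ^ 4 := by positivity
        nlinarith
      calc _ ≤ (2 * n + 1) * ((2 * n + k + 3) ^ 4 / 4) * (4 * (2 + 3 * n + 2 * k))
            * (2 * n + k + 2) ^ 4 := by
            gcongr <;> linarith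
        _ = _ := by ring
    _ = _ := by ring

/-- The hypergeometric term of the second pair, starting from `2 / (k + 1) ^ 3` at `n = 0`. -/
noncomputable def FA (n k : ℕ) : ℝ := (∏ i ∈ range n, ρA i k) * (2 / ((k : ℝ) + 1) ^ 3)

theorem FA_succ (n k : ℕ) : FA (n + 1) k = ρA n k * FA n k := by
  unfold FA; rw [prod_range_succ]; ring

theorem FA_shift (n k : ℕ) : FA n (k + 1) = σA n k * FA n k := by
  induction n with
  | zero =>
    simp only [FA, σA, range_zero, prod_empty]
    push_cast
    have : (k : ℝ) + 2 ≠ 0 := by positivity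
    have : (k : ℝ) + 1 ≠ 0 := by positivity
    have e : (2 : ℝ) + 3 * 0 + 2 * k = 2 * (k + 1) := by ring
    have e' : (4 : ℝ) + 3 * 0 + 2 * k = 2 * (k + 2) := by ring
    have e2 : (k : ℝ) + 1 + 1 = k + 2 := by ring
    rw [e, e', e2]
    simp only [mul_zero, zero_add]
    field_simp
  | succ n ih =>
    rw [FA_succ, FA_succ, ih]
    have := σ_mul_ρA n k (by positivity) (by positivity)
    push_cast
    linear_combination this * FA n k

theorem abs_FA_le (n k : ℕ) : |FA n k| ≤ 2 / ((k : ℝ) + 1) ^ 3 := by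
  induction n with
  | zero => simp [FA, abs_div]; rw [abs_of_nonneg (by positivity)]
  | succ n ih =>
    rw [FA_succ, abs_mul]
    have := abs_ρA_le n k (by positivity) (by positivity)
    nlinarith [abs_nonneg (FA n k)]

/-- `RA` grows only linearly in `k` while `FA` decays like `k ^ (-3)`, so this pair has no boundary
term at infinity. -/
theorem tendsto_RA (n : ℕ) :
    Tendsto (fun k : ℕ => RA n k / k) atTop (𝓝 (1 / (2 * (2 * n + 1)))) := by
  have hinv := tendsto_one_div_atTop_nhds_zero_nat (𝕜 := ℝ)
  set f : ℝ → ℝ := fun x => (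
    (205 * n ^ 6 + 1070 * n ^ 5 + 2307 * n ^ 4 + 2628 * n ^ 3 + 1667 * n ^ 2 + 558 * n + 77) * x ^ 6
    + (574 * n ^ 5 + 2486 * n ^ 4 + 4268 * n ^ 3 + 3628 * n ^ 2 + 1526 * n + 254) * x ^ 5
    + (664 * n ^ 4 + 2288 * n ^ 3 + 2928 * n ^ 2 + 1648 * n + 344) * x ^ 4
    + (408 * n ^ 3 + 1048 * n ^ 2 + 888 * n + 248) * x ^ 3
    + (141 * n ^ 2 + 240 * n + 101) * x ^ 2 + (26 * n + 22) * x + 2)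
     / (2 * (2 * n + 1) * ((2 + 3 * n) * x + 2) * ((2 * n + 2) * x + 1) ^ 4) with hf
  have hc : ContinuousAt f 0 := by
    have : (2 * (2 * n + 1) * ((2 + 3 * n) * (0:ℝ) + 2) * ((2 * n + 2) * (0:ℝ) + 1) ^ 4) ≠ 0 := by
      simp only [mul_zero, zero_add]; positivity
    fun_prop (disch := assumption)
  have h0 : f 0 = 1 / (2 * (2 * n + 1)) := by
    simp [hf]; field_simp
  rw [← h0]
  refine (hc.tendsto.comp hinv).congr' ?_
  filter_upwards [eventually_ne_atTop 0] with k hk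
  have hk : (k : ℝ) ≠ 0 := by exact_mod_cast hk
  have h1 : (2 : ℝ) * n + 1 ≠ 0 := by positivity
  have h2 : (2 + 3 * (n : ℝ) + 2 * k) ≠ 0 := by positivity
  have h3 : (2 * (n : ℝ) + k + 2) ≠ 0 := by positivity
  have e2 : (2 + 3 * (n : ℝ)) * (1 / k) + 2 = (2 + 3 * (n : ℝ) + 2 * k) / k := by field_simp
  have e3 : (2 * (n : ℝ) + 2) * (1 / k) + 1 = (2 * (n : ℝ) + k + 2) / k := by field_simp; ring
  simp only [hf, Function.comp, RA, WA]
  rw [e2, e3]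
  field_simp

/-- The Amdeberhan–Zeilberger series, in the form `∑ₙ FA (n, 0) RA (n, 0) = 2 ζ(3)`. -/
theorem AZ_sum {z : ℝ} (hz : HasSum (fun k : ℕ => 1 / ((k : ℝ) + 1) ^ 3) z) :
    Tendsto (fun N => ∑ n ∈ range N, FA n 0 * RA n 0) atTop (𝓝 (2 * z)) := by
  have h := wz_sum (F := FA) (G := fun n k => FA n k * RA n k) (g := fun _ => 0) (S := 2 * z)
    ?_ ?_ ?_ ?_ ?_
  · simpa using h
  · intro n k
    have := wz_certA n k (by positivity) (by positivity)
    rw [FA_succ, FA_shift]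
    push_cast
    linear_combination this * FA n k
  · intro n
    have h1 : Tendsto (fun k : ℕ => (k : ℝ) * FA n k) atTop (𝓝 0) := by
      have := (tendsto_one_div_add_atTop_nhds_zero_nat (𝕜 := ℝ)).const_mul 2
      rw [mul_zero] at this
      refine squeeze_zero_norm (fun k => ?_) this
      rw [norm_mul, Real.norm_eq_abs, Real.norm_eq_abs, abs_of_nonneg (by positivity)]
      calc (k : ℝ) * |FA n k| ≤ (k + 1) * (2 / ((k : ℝ) + 1) ^ 3) := by
            gcongr
            · linarith
            · exact abs_FA_le n k
        _ = 2 * (1 / ((k : ℝ) + 1)) * (1 / (k + 1)) := by field_simp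
        _ ≤ 2 * (1 / ((k : ℝ) + 1)) * 1 := by
            gcongr
            rw [div_le_one (by positivity)]
            have : (0 : ℝ) ≤ k := by positivity
            linarith
        _ = _ := by ring
    have h2 := h1.mul (tendsto_RA n)
    rw [zero_mul] at h2
    refine h2.congr' ?_
    filter_upwards [eventually_ne_atTop 0] with k hk
    have hk : (k : ℝ) ≠ 0 := by exact_mod_cast hk
    field_simp
  · refine hasSum_of_eq (fun k => ?_) (hz.mul_left 2)
    simp [FA]; ring
  · intro k; simp [FA]; positivity
  · intro n k
    rw [FA_succ, abs_mul]
    exact mul_le_mul_of_nonneg_right (abs_ρA_le n k (by positivity) (by positivity)) (abs_nonneg _)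

/-! ### Combining the two pairs -/

theorem FA_zero (n : ℕ) : FA n 0 = 8 * (3 * n + 2) * c n / (2 * n + 1) ^ 4 := by
  induction n with
  | zero => norm_num [FA, c]
  | succ n ih =>
    have p1 : 2 * (n : ℝ) + 1 ≠ 0 := by positivity
    have p2 : 3 * (n : ℝ) + 2 ≠ 0 := by positivity
    have p3 : 2 * (n : ℝ) + 3 ≠ 0 := by positivity
    have p4 : (n : ℝ) + 1 ≠ 0 := by positivity
    have e1 : 2 + 3 * (n : ℝ) + 2 * (0 : ℕ) = 3 * n + 2 := by push_cast; ring
    have e2 : 2 * (n : ℝ) + (0 : ℕ) + 2 = 2 * (n + 1) := by push_cast; ring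
    have e3 : 2 * (n : ℝ) + (0 : ℕ) + 3 = 2 * n + 3 := by push_cast; ring
    have e4 : 5 + 3 * (n : ℝ) + 2 * (0 : ℕ) = 3 * (n + 1 : ℕ) + 2 := by push_cast; ring
    have e5 : 2 * ((n + 1 : ℕ) : ℝ) + 1 = 2 * n + 3 := by push_cast; ring
    have e6 : (n : ℝ) + (0 : ℕ) + 1 = n + 1 := by push_cast; ring
    rw [FA_succ, ih, c_succ, ρA, e1, e2, e3, e4, e5, e6]
    field_simp

/-- The terms of the Amdeberhan–Zeilberger series are multiples of the boundary terms of the first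
pair. -/
theorem FA_mul_RA_zero (n : ℕ) : FA n 0 * RA n 0 = -16 * g n := by
  have p1 : 2 * (n : ℝ) + 1 ≠ 0 := by positivity
  have p2 : 3 * (n : ℝ) + 2 ≠ 0 := by positivity
  have p4 : (n : ℝ) + 1 ≠ 0 := by positivity
  have e1 : 2 + 3 * (n : ℝ) + 2 * (0 : ℝ) = 3 * n + 2 := by ring
  have e2 : 2 * (n : ℝ) + (0 : ℝ) + 2 = 2 * (n + 1) := by ring
  have e3 : WA n (0 : ℝ) = (n + 1 : ℝ) ^ 4 * (205 * (n : ℝ) ^ 2 + 250 * n + 77) := by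
    unfold WA; ring
  rw [FA_zero, RA, e1, e2, e3, g]
  field_simp
  ring

theorem hasSum_series : HasSum (fun n : ℕ =>
        (1397760 * (n : ℝ) ^ 6 + 5727104 * (n : ℝ) ^ 5 + 9673968 * (n : ℝ) ^ 4
            + 8600034 * (n : ℝ) ^ 3 + 4227785 * (n : ℝ) ^ 2 + 1083660 * (n : ℝ) + 112149)
          * (8 * (n : ℝ) + 1) * (Nat.choose (8 * n) (4 * n) : ℝ)
          / (512 * (4 * (n : ℝ) + 1) ^ 5 * (4 * (n : ℝ) + 3) ^ 5
              * (Nat.choose (4 * n) (2 * n) : ℝ) ^ 4 * (Nat.choose (2 * n) n : ℝ) ^ 2))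
      (3 / 4 * ∑' k : ℕ, 1 / ((k : ℝ) + 1) ^ 3) := by
  have hz : HasSum (fun k : ℕ => 1 / ((k : ℝ) + 1) ^ 3) (∑' k : ℕ, 1 / ((k : ℝ) + 1) ^ 3) := by
    have h := (summable_nat_add_iff 1).2 (Real.summable_one_div_nat_pow.2 (by norm_num : 1 < 3))
    push_cast at h
    exact h.hasSum
  set z := ∑' k : ℕ, 1 / ((k : ℝ) + 1) ^ 3
  have h1 := wz_sum (F := F) (G := fun n k => F n k * R n k) (g := g) (S := 7 / 8 * z)
    (fun n k => by
      have := wz_cert n k (by positivity) (by positivity) (odd_ne n k).1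
      rw [F_succ, F_shift]
      push_cast
      linear_combination this * F n k)
    tendsto_G (hasSum_of_eq (fun k => by simp [F]) (odd_sum hz))
    (fun k => by simp only [F, range_zero, prod_empty]; positivity)
    (fun n k => by
      rw [F_succ, abs_mul]
      exact mul_le_mul_of_nonneg_right (abs_ρ_le n k (by positivity) (by positivity))
        (abs_nonneg _))
  have h2 := (AZ_sum hz).const_mul (1 / 16)
  have h3 := h1.sub h2
  rw [show 7 / 8 * z - 1 / 16 * (2 * z) = 3 / 4 * z by ring] at h3
  refine (hasSum_iff_tendsto_nat_of_nonneg (fun n => by positivity) _).2 (h3.congr fun N => ?_)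
  rw [mul_sum, ← sum_sub_distrib]
  refine sum_congr rfl fun n _ => ?_
  rw [FA_mul_RA_zero, ← F_mul_R_zero]
  push_cast
  ring

end ZetaThree

theorem three_quarters_zeta3_series :
    ∑' n : ℕ,
        (1397760 * (n : ℝ) ^ 6 + 5727104 * (n : ℝ) ^ 5 + 9673968 * (n : ℝ) ^ 4
            + 8600034 * (n : ℝ) ^ 3 + 4227785 * (n : ℝ) ^ 2 + 1083660 * (n : ℝ) + 112149)
          * (8 * (n : ℝ) + 1) * (Nat.choose (8 * n) (4 * n) : ℝ)
          / (512 * (4 * (n : ℝ) + 1) ^ 5 * (4 * (n : ℝ) + 3) ^ 5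
              * (Nat.choose (4 * n) (2 * n) : ℝ) ^ 4 * (Nat.choose (2 * n) n : ℝ) ^ 2) =
      (3 / 4) * ∑' k : ℕ, 1 / ((k : ℝ) + 1) ^ 3 :=
  ZetaThree.hasSum_series.tsum_eq
end
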